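/- arXiv:1109.6528 — 2 statements merged into one kernel-verified Lean document; each statement's English description precedes it below -/
import Mathlib

section
/- Let (R,m) be a local ring with depth R > 0 and let M be a stable R-module with Gdim_{R_p}(M_p) = 0 for all primes p ≠ m. Then: (i) M is horizontally linked if and only if Γ_m(M) = 0; (ii) if moreover M is horizontally linked of finite and positive G-dimension, then rgr(M) = depth_R(λM) and rgr(λM) = depth_R(M). -/
open CategoryTheory

noncomputable section

universe u

/-- The `i`-th Ext group `Ext^i_R(M,N)`, as a type (with its `R`-module structure). -/
abbrev extM (R : Type u) [CommRing R] (i : ℕ) (M N : Type u) [AddCommGroup M] [Module R M]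
    [AddCommGroup N] [Module R N] : Type u :=
  ((Ext R (ModuleCat.{u} R) i).obj (Opposite.op (ModuleCat.of R M))).obj (ModuleCat.of R N)

/-- The `i`-th Tor group `Tor^R_i(M,N)`, as a type. -/
abbrev torM (R : Type u) [CommRing R] (i : ℕ) (M N : Type u) [AddCommGroup M] [Module R M]
    [AddCommGroup N] [Module R N] : Type u :=
  ((Tor (ModuleCat.{u} R) i).obj (ModuleCat.of R M)).obj (ModuleCat.of R N)

/-- The `i`-th local cohomology `H^i_I(M)`, as a type. -/
abbrev locCoh (R : Type u) [CommRing R] (I : Ideal R) (i : ℕ) (M : Type u) [AddCommGroup M]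
    [Module R M] : Type u :=
  (localCohomology I i).obj (ModuleCat.of R M)

/-- A submodule `N ≤ M` is superfluous if `K ⊔ N = ⊤` implies `K = ⊤`. -/
def Submodule.IsSuperfluous {R M : Type u} [CommRing R] [AddCommGroup M] [Module R M]
    (N : Submodule R M) : Prop :=
  ∀ K : Submodule R M, K ⊔ N = ⊤ → K = ⊤

/-- A minimal projective resolution of `M` by finitely generated projective modules:
each `P i → Ω^i M` is a projective cover (i.e. has superfluous kernel). -/
structure MinRes (R : Type u) [CommRing R] (M : Type u) [AddCommGroup M] [Module R M] where
  P : ℕ → ModuleCat.{u} R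
  projective : ∀ i, Module.Projective R (P i)
  finite : ∀ i, Module.Finite R (P i)
  d : (i : ℕ) → (↥(P (i + 1)) →ₗ[R] ↥(P i))
  ε : ↥(P 0) →ₗ[R] M
  surj : Function.Surjective ε
  exact0 : LinearMap.range (d 0) = LinearMap.ker ε
  exact : ∀ i, LinearMap.range (d (i + 1)) = LinearMap.ker (d i)
  min_eps : (LinearMap.ker ε).IsSuperfluous
  min_d : ∀ i, (LinearMap.ker (d i)).IsSuperfluous

namespace MinRes

variable {R M : Type u} [CommRing R] [AddCommGroup M] [Module R M]

/-- `T k F` is the Auslander-Bridger transpose `𝒯_{k+1} M = Tr Ω^k M`, computed as the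
cokernel of `P_k* → P_{k+1}*`. -/
def T (F : MinRes R M) (k : ℕ) : Type u :=
  (Module.Dual R ↥(F.P (k + 1))) ⧸ LinearMap.range (F.d k).dualMap

instance (F : MinRes R M) (k : ℕ) : AddCommGroup (F.T k) :=
  inferInstanceAs (AddCommGroup ((Module.Dual R ↥(F.P (k + 1))) ⧸
    LinearMap.range (F.d k).dualMap))

instance (F : MinRes R M) (k : ℕ) : Module R (F.T k) :=
  inferInstanceAs (Module R ((Module.Dual R ↥(F.P (k + 1))) ⧸
    LinearMap.range (F.d k).dualMap))

/-- The transpose `Tr M = coker(P₀* → P₁*)` computed from a minimal projective presentation. -/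
abbrev Tr (F : MinRes R M) : Type u := F.T 0

/-- `λM = ΩTr M`, realized as the image of `P₀* → P₁*` for a minimal projective
presentation `P₁ → P₀ → M → 0`. -/
def lambdaMod (F : MinRes R M) : Type u :=
  ↥(LinearMap.range (F.d 0).dualMap)

instance (F : MinRes R M) : AddCommGroup F.lambdaMod :=
  inferInstanceAs (AddCommGroup ↥(LinearMap.range (F.d 0).dualMap))

instance (F : MinRes R M) : Module R F.lambdaMod :=
  inferInstanceAs (Module R ↥(LinearMap.range (F.d 0).dualMap))

end MinRes

/-- `M` is a horizontally linked `R`-module, i.e. `M ≅ λλM`. -/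
def IsHorizontallyLinked (R : Type u) [CommRing R] (M : Type u) [AddCommGroup M]
    [Module R M] : Prop :=
  ∃ (F : MinRes R M) (G : MinRes R F.lambdaMod), Nonempty (G.lambdaMod ≃ₗ[R] M)

/-- `M` and `N` are horizontally linked to each other: `M ≅ λN` and `N ≅ λM`. -/
def MutuallyLinked (A : Type u) [CommRing A] (M N : Type u) [AddCommGroup M] [Module A M]
    [AddCommGroup N] [Module A N] : Prop :=
  ∃ (F : MinRes A M) (G : MinRes A N),
    Nonempty (F.lambdaMod ≃ₗ[A] N) ∧ Nonempty (G.lambdaMod ≃ₗ[A] M)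

/-- `M` is linked to `N` by the ideal `c`: `c` annihilates both modules and they are
horizontally linked to each other as `R ⧸ c`-modules. -/
def LinkedBy (R : Type u) [CommRing R] (c : Ideal R) (M N : Type u) [AddCommGroup M]
    [Module R M] [AddCommGroup N] [Module R N] : Prop :=
  ∃ (hM : Module.IsTorsionBySet R M c) (hN : Module.IsTorsionBySet R N c),
    letI := hM.module
    letI := hN.module
    MutuallyLinked (R ⧸ c) M N

/-- A stable module: no nonzero projective direct summand. -/
def IsStableModule (R : Type u) [CommRing R] (M : Type u) [AddCommGroup M] [Module R M] : Prop :=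
  ∀ N : Submodule R M, Module.Projective R ↥N → (∃ N' : Submodule R M, IsCompl N N') → N = ⊥

/-- `M` has G-dimension zero: `M` is finitely generated and reflexive,
and `Ext^i(M,R) = 0 = Ext^i(M*,R)` for all `i > 0`. -/
def IsGDimZero (R : Type u) [CommRing R] (M : Type u) [AddCommGroup M] [Module R M] : Prop :=
  Module.Finite R M ∧ Function.Bijective (Module.Dual.eval R M) ∧
    (∀ i : ℕ, 0 < i → Subsingleton (extM R i M R)) ∧
    (∀ i : ℕ, 0 < i → Subsingleton (extM R i (Module.Dual R M) R))

/-- `M` admits a resolution of length `≤ n` by modules of G-dimension zero. -/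
def GDimLE (R : Type u) [CommRing R] : ℕ → ModuleCat.{u} R → Prop
  | 0, M => IsGDimZero R ↥M
  | n + 1, M =>
    ∃ (G : ModuleCat.{u} R) (f : ↥G →ₗ[R] ↥M), IsGDimZero R ↥G ∧ Function.Surjective f ∧
      GDimLE R n (ModuleCat.of R ↥(LinearMap.ker f))

/-- The G-dimension of `M`: the minimal length of a resolution of `M` by modules of
G-dimension zero (`∞` if there is none). -/
def GDim (R : Type u) [CommRing R] (M : Type u) [AddCommGroup M] [Module R M] : ℕ∞ :=
  sInf {n : ℕ∞ | ∃ k : ℕ, n = k ∧ GDimLE R k (ModuleCat.of R M)}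

/-- The reduced grade of `M`: `rgr M = inf{ i > 0 | Ext^i(M,R) ≠ 0 }`. -/
def rgr (R : Type u) [CommRing R] (M : Type u) [AddCommGroup M] [Module R M] : ℕ∞ :=
  sInf {n : ℕ∞ | ∃ k : ℕ, n = k ∧ 0 < k ∧ ¬ Subsingleton (extM R k M R)}

/-- The grade of `M`: `gr M = inf{ i ≥ 0 | Ext^i(M,R) ≠ 0 }`. -/
def egrade (R : Type u) [CommRing R] (M : Type u) [AddCommGroup M] [Module R M] : ℕ∞ :=
  sInf {n : ℕ∞ | ∃ k : ℕ, n = k ∧ ¬ Subsingleton (extM R k M R)}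

/-- `depth_I(M) = inf{ i | Ext^i(R/I, M) ≠ 0 }`; for `I` the maximal ideal of a
local ring this is the depth of `M`. -/
def edepth (R : Type u) [CommRing R] (I : Ideal R) (M : Type u) [AddCommGroup M]
    [Module R M] : ℕ∞ :=
  sInf {n : ℕ∞ | ∃ k : ℕ, n = k ∧ ¬ Subsingleton (extM R k (R ⧸ I) M)}

/-- The depth of the local ring `R`. -/
def rdepth (R : Type u) [CommRing R] [IsLocalRing R] : ℕ∞ :=
  edepth R (IsLocalRing.maximalIdeal R) R

/-- `depth_{R_p}(M_p)`. -/
def locDepth (R : Type u) [CommRing R] (p : Ideal R) [p.IsPrime] (M : Type u) [AddCommGroup M]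
    [Module R M] : ℕ∞ :=
  edepth (Localization.AtPrime p) (IsLocalRing.maximalIdeal (Localization.AtPrime p))
    (LocalizedModule p.primeCompl M)

/-- `depth R_p`. -/
def locRingDepth (R : Type u) [CommRing R] (p : Ideal R) [p.IsPrime] : ℕ∞ :=
  rdepth (Localization.AtPrime p)

/-- `Gdim_{R_p}(M_p)`. -/
def locGDim (R : Type u) [CommRing R] (p : Ideal R) [p.IsPrime] (M : Type u) [AddCommGroup M]
    [Module R M] : ℕ∞ :=
  GDim (Localization.AtPrime p) (LocalizedModule p.primeCompl M)

/-- `rgr_{R_p}(M_p)`. -/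
def locRgr (R : Type u) [CommRing R] (p : Ideal R) [p.IsPrime] (M : Type u) [AddCommGroup M]
    [Module R M] : ℕ∞ :=
  rgr (Localization.AtPrime p) (LocalizedModule p.primeCompl M)

/-- `dim_{R_p}(M_p)`, the Krull dimension of the support of `M_p` over `R_p`. -/
def locDim (R : Type u) [CommRing R] (p : Ideal R) [p.IsPrime] (M : Type u) [AddCommGroup M]
    [Module R M] : WithBot ℕ∞ :=
  ringKrullDim ((Localization.AtPrime p) ⧸
    Module.annihilator (Localization.AtPrime p) (LocalizedModule p.primeCompl M))

/-- `M` satisfies the condition `S̃_k`: `depth_{R_p}(M_p) ≥ min{k, depth R_p}` for all primes. -/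
def Stilde (R : Type u) [CommRing R] (k : ℕ) (M : Type u) [AddCommGroup M] [Module R M] : Prop :=
  ∀ (p : Ideal R) (_ : p.IsPrime), min (k : ℕ∞) (locRingDepth R p) ≤ locDepth R p M

/-- `M` satisfies Serre's condition `(S_k)`:
`depth_{R_p}(M_p) ≥ min{k, dim_{R_p}(M_p)}` for all primes. -/
def SerreS (R : Type u) [CommRing R] (k : ℕ) (M : Type u) [AddCommGroup M] [Module R M] : Prop :=
  ∀ (p : Ideal R) (_ : p.IsPrime),
    min (k : WithBot ℕ∞) (locDim R p M) ≤ (locDepth R p M : WithBot ℕ∞)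

/-- `M` is a `k`-th syzygy module. -/
def IsKthSyzygy (R : Type u) [CommRing R] : ℕ → ModuleCat.{u} R → Prop
  | 0, _ => True
  | k + 1, M =>
    ∃ (P : ModuleCat.{u} R) (f : ↥M →ₗ[R] ↥P), Module.Projective R ↥P ∧ Module.Finite R ↥P ∧
      Function.Injective f ∧ IsKthSyzygy R k (ModuleCat.of R (↥P ⧸ LinearMap.range f))

/-- The `I`-torsion submodule `Γ_I(M) = { x | I^n x = 0 for some n }`. -/
def gammaTorsion (R : Type u) [CommRing R] (I : Ideal R) (M : Type u) [AddCommGroup M]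
    [Module R M] : Submodule R M where
  carrier := {x | ∃ n : ℕ, ∀ a ∈ I ^ n, a • x = 0}
  zero_mem' := ⟨0, fun a _ => smul_zero a⟩
  add_mem' := by
    rintro x y ⟨n, hn⟩ ⟨m, hm⟩
    exact ⟨n + m, fun a ha => by
      rw [smul_add, hn a (Ideal.pow_le_pow_right (Nat.le_add_right n m) ha),
        hm a (Ideal.pow_le_pow_right (Nat.le_add_left m n) ha), add_zero]⟩
  smul_mem' := by
    rintro c x ⟨n, hn⟩
    exact ⟨n, fun a ha => by rw [smul_comm, hn a ha, smul_zero]⟩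

/-- `N` has finite flat dimension (characterized by uniform vanishing of `Tor`). -/
def HasFiniteFlatDim (R : Type u) [CommRing R] (N : Type u) [AddCommGroup N] [Module R N] : Prop :=
  ∃ n : ℕ, ∀ i : ℕ, n < i → ∀ (M : ModuleCat.{u} R), Subsingleton (torM R i ↥M N)

/-- `N` has finite injective dimension (characterized by uniform vanishing of `Ext`). -/
def HasFiniteInjDim (R : Type u) [CommRing R] (N : Type u) [AddCommGroup N] [Module R N] : Prop :=
  ∃ n : ℕ, ∀ i : ℕ, n < i → ∀ (M : ModuleCat.{u} R), Subsingleton (extM R i ↥M N)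

/-- `K` is a semidualizing `R`-module. -/
def IsSemidualizing (R : Type u) [CommRing R] (K : Type u) [AddCommGroup K] [Module R K] : Prop :=
  Module.Finite R K ∧ Function.Bijective (LinearMap.lsmul R K) ∧
    ∀ i : ℕ, 0 < i → Subsingleton (extM R i K K)

/-- The biduality map `M → Hom(Hom(M,K),K)`. -/
def evalK (R : Type u) [CommRing R] (K M : Type u) [AddCommGroup K] [Module R K]
    [AddCommGroup M] [Module R M] : M →ₗ[R] ((M →ₗ[R] K) →ₗ[R] K) :=
  LinearMap.applyₗ

/-- `M` has `G_K`-dimension zero. -/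
def IsGKDimZero (R : Type u) [CommRing R] (K M : Type u) [AddCommGroup K] [Module R K]
    [AddCommGroup M] [Module R M] : Prop :=
  Module.Finite R M ∧ Function.Bijective (evalK R K M) ∧
    (∀ i : ℕ, 0 < i → Subsingleton (extM R i M K)) ∧
    (∀ i : ℕ, 0 < i → Subsingleton (extM R i (M →ₗ[R] K) K))

/-- `M` admits a resolution of length `≤ n` by modules of `G_K`-dimension zero. -/
def GKDimLE (R : Type u) [CommRing R] (K : Type u) [AddCommGroup K] [Module R K] :
    ℕ → ModuleCat.{u} R → Prop
  | 0, M => IsGKDimZero R K ↥M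
  | n + 1, M =>
    ∃ (G : ModuleCat.{u} R) (f : ↥G →ₗ[R] ↥M), IsGKDimZero R K ↥G ∧ Function.Surjective f ∧
      GKDimLE R K n (ModuleCat.of R ↥(LinearMap.ker f))

/-- The `G_K`-dimension of `M`. -/
def GKDim (R : Type u) [CommRing R] (K M : Type u) [AddCommGroup K] [Module R K]
    [AddCommGroup M] [Module R M] : ℕ∞ :=
  sInf {n : ℕ∞ | ∃ k : ℕ, n = k ∧ GKDimLE R K k (ModuleCat.of R M)}

/-- The grade of a module, `gr_R(M) = grade(Ann_R(M), R) = inf{i | Ext^i(R/Ann M, R) ≠ 0}`. -/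
def grAnn (R : Type u) [CommRing R] (M : Type u) [AddCommGroup M] [Module R M] : ℕ∞ :=
  egrade R (R ⧸ Module.annihilator R M)

/-- The grade of an ideal, `grade(I) = inf{i | Ext^i(R/I, R) ≠ 0}`. -/
def gradeI (R : Type u) [CommRing R] (I : Ideal R) : ℕ∞ :=
  egrade R (R ⧸ I)

/-- The ideal `I` is `G_K`-Gorenstein: `R/I` is `G_K`-perfect and `Ext^{gr I}(R/I, K)` is
cyclic. -/
def IsGKGorensteinIdeal (R : Type u) [CommRing R] (K : Type u) [AddCommGroup K] [Module R K]
    (I : Ideal R) : Prop :=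
  ∃ n : ℕ, grAnn R (R ⧸ I) = (n : ℕ∞) ∧ GKDim R K (R ⧸ I) = (n : ℕ∞) ∧
    ∃ x : extM R n (R ⧸ I) K, Submodule.span R {x} = ⊤

end

section Helpers
universe u

theorem extM_succ_iff {R : Type u} [CommRing R] (n : ℕ) (X Y : ModuleCat.{u} R)
    (P : ProjectiveResolution X) :
    Subsingleton (((Ext R (ModuleCat.{u} R) (n+1)).obj (Opposite.op X)).obj Y) ↔
      ∀ f : P.complex.X (n+1) ⟶ Y, P.complex.d (n+2) (n+1) ≫ f = 0 →
        ∃ g : P.complex.X n ⟶ Y, P.complex.d (n+1) n ≫ g = f := by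
  rw [← ModuleCat.isZero_iff_subsingleton, (P.isoExt (R := R) (n+1) Y).isZero_iff,
    ← HomologicalComplex.exactAt_iff_isZero_homology,
    HomologicalComplex.exactAt_iff' _ n (n+1) (n+2) (by simp) (by simp),
    ShortComplex.moduleCat_exact_iff]
  rfl

theorem extM_zero_iff {R : Type u} [CommRing R] (X Y : ModuleCat.{u} R)
    (P : ProjectiveResolution X) :
    Subsingleton (((Ext R (ModuleCat.{u} R) 0).obj (Opposite.op X)).obj Y) ↔
      ∀ f : P.complex.X 0 ⟶ Y, P.complex.d 1 0 ≫ f = 0 → f = 0 := by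
  rw [← ModuleCat.isZero_iff_subsingleton, (P.isoExt (R := R) 0 Y).isZero_iff,
    ← HomologicalComplex.exactAt_iff_isZero_homology,
    HomologicalComplex.exactAt_iff' _ 0 0 1 (by simp) (by simp),
    ShortComplex.moduleCat_exact_iff]
  constructor
  · intro h f hf
    obtain ⟨g, hg⟩ := h f hf
    rw [← hg]
    have : (P.complex.linearYonedaObj R Y).d 0 0 = 0 := HomologicalComplex.shape _ _ _ (by simp)
    change ((P.complex.linearYonedaObj R Y).d 0 0).hom g = 0
    rw [this]; rfl
  · intro h f hf
    exact ⟨0, by rw [map_zero]; exact (h f hf).symm⟩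

theorem extM_iff {R : Type u} [CommRing R] (n : ℕ) (X Y : ModuleCat.{u} R) :
    Subsingleton (((Ext R (ModuleCat.{u} R) n).obj (Opposite.op X)).obj Y) ↔
      Subsingleton (Abelian.Ext.{u} X Y n) := by
  let P := projectiveResolution X
  rcases n with _ | n
  · rw [extM_zero_iff X Y P, Abelian.Ext.addEquiv₀.subsingleton_congr]
    constructor
    · intro h
      refine subsingleton_of_forall_eq 0 fun f => ?_
      have h0 : P.complex.d 1 0 ≫ P.π.f 0 = 0 := P.complex_d_comp_π_f_zero
      have h1 := h (P.π.f 0 ≫ f) 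
        ((Category.assoc _ _ _).symm.trans ((congrArg (· ≫ f) h0).trans Limits.zero_comp))
      exact (cancel_epi (P.π.f 0)).1 (h1.trans Limits.comp_zero.symm)
    · intro h f hf
      have hex := P.exact₀
      obtain ⟨l, hl⟩ := hex.desc' f hf
      have h0 : l = 0 := @Subsingleton.elim (X ⟶ Y) h l 0
      rw [← hl, h0]; exact Limits.comp_zero
  · rw [extM_succ_iff n X Y P]
    constructor
    · intro h
      refine subsingleton_of_forall_eq 0 fun x => ?_
      obtain ⟨f, hf, rfl⟩ := P.extMk_surjective x (n+2) rfl
      rw [P.extMk_eq_zero_iff f (n+2) rfl hf n rfl]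
      exact h f hf
    · intro h f hf
      rw [← P.extMk_eq_zero_iff f (n+2) rfl hf n rfl]
      exact Subsingleton.elim _ _

section EVsec
variable {R : Type u} [CommRing R]

/-- vanishing of Ext -/
def EV (R : Type u) [CommRing R] (n : ℕ) (X Y : Type u) [AddCommGroup X] [Module R X]
    [AddCommGroup Y] [Module R Y] : Prop :=
  Subsingleton (Abelian.Ext.{u} (ModuleCat.of R X) (ModuleCat.of R Y) n)

variable {K X Y Z W : Type u} [AddCommGroup X] [Module R X] [AddCommGroup Y] [Module R Y]
  [AddCommGroup Z] [Module R Z] [AddCommGroup K] [Module R K] [AddCommGroup W] [Module R W]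

theorem extM_iff_EV (n : ℕ) : Subsingleton (extM R n X Y) ↔ EV R n X Y := extM_iff n _ _

theorem EV_zero : EV R 0 X Y ↔ ∀ f : X →ₗ[R] Y, f = 0 := by
  unfold EV
  rw [Abelian.Ext.addEquiv₀.subsingleton_congr,
    (ModuleCat.homAddEquiv (R := R) (M := ModuleCat.of R X) (N := ModuleCat.of R Y)).subsingleton_congr]
  exact ⟨fun h _ => Subsingleton.elim _ _, fun h => subsingleton_of_forall_eq 0 h⟩

theorem EV_iff {n : ℕ} : EV R n X Y ↔
    ∀ x : Abelian.Ext.{u} (ModuleCat.of R X) (ModuleCat.of R Y) n, x = 0 :=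
  ⟨fun h _ => @Subsingleton.elim _ h _ _, fun h => subsingleton_of_forall_eq 0 h⟩

theorem EV_congr_right {n : ℕ} (e : Y ≃ₗ[R] Z) (h : EV R n X Y) : EV R n X Z := by
  rw [EV_iff] at h ⊢
  intro x
  have h1 := h (x.comp (Abelian.Ext.mk₀ (ModuleCat.ofHom e.symm.toLinearMap)) (add_zero n))
  have h2 : ModuleCat.ofHom e.symm.toLinearMap ≫ ModuleCat.ofHom e.toLinearMap =
    𝟙 (ModuleCat.of R Z) := by ext; simp
  calc x = x.comp (Abelian.Ext.mk₀ (𝟙 _)) (add_zero n) := by simp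
    _ = 0 := by
      rw [← h2, ← Abelian.Ext.mk₀_comp_mk₀, ← Abelian.Ext.comp_assoc_of_third_deg_zero, h1]
      simp

theorem EV_congr_left {n : ℕ} (e : X ≃ₗ[R] Z) (h : EV R n X Y) : EV R n Z Y := by
  rw [EV_iff] at h ⊢
  intro x
  have h1 := h ((Abelian.Ext.mk₀ (ModuleCat.ofHom e.toLinearMap)).comp x (zero_add n))
  have h2 : ModuleCat.ofHom e.symm.toLinearMap ≫ ModuleCat.ofHom e.toLinearMap =
    𝟙 (ModuleCat.of R Z) := by ext; simp
  calc x = (Abelian.Ext.mk₀ (𝟙 _)).comp x (zero_add n) := by simp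
    _ = 0 := by
      rw [← h2, ← Abelian.Ext.mk₀_comp_mk₀_assoc, h1]
      simp

/-- short complex from exactness -/
abbrev scOf (f : X →ₗ[R] Y) (g : Y →ₗ[R] Z) (h : Function.Exact f g) :
    ShortComplex (ModuleCat.{u} R) :=
  ShortComplex.mk (ModuleCat.ofHom f) (ModuleCat.ofHom g)
    (by ext x; exact h.apply_apply_eq_zero x)

theorem scOf_se (f : X →ₗ[R] Y) (g : Y →ₗ[R] Z) (h : Function.Exact f g)
    (hf : Function.Injective f) (hg : Function.Surjective g) : (scOf f g h).ShortExact where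
  exact := (ShortComplex.ShortExact.moduleCat_exact_iff_function_exact _).2 h
  mono_f := (ModuleCat.mono_iff_injective _).2 hf
  epi_g := (ModuleCat.epi_iff_surjective _).2 hg

section
variable (f : X →ₗ[R] Y) (g : Y →ₗ[R] Z) (h : Function.Exact f g)
    (hf : Function.Injective f) (hg : Function.Surjective g)
include h hf hg

theorem cov_left {n : ℕ} (hY : EV R (n+1) K Y) (hZ : EV R n K Z) : EV R (n+1) K X := by
  rw [EV_iff] at *
  intro x
  obtain ⟨y, hy⟩ := Abelian.Ext.covariant_sequence_exact₁ _ (scOf_se f g h hf hg) x (hY _) rfl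
  rw [← hy, hZ y]
  simp

theorem cov_right {n : ℕ} (hY : EV R n K Y) (hX : EV R (n+1) K X) : EV R n K Z := by
  rw [EV_iff] at *
  intro x
  obtain ⟨y, hy⟩ := Abelian.Ext.covariant_sequence_exact₃ _ (scOf_se f g h hf hg) x rfl (hX _)
  rw [← hy, hY y]
  simp

/-- contravariant -/
theorem con_right {n : ℕ} (hY : EV R (n+1) Y K) (hX : EV R n X K) : EV R (n+1) Z K := by
  rw [EV_iff] at *
  intro x
  obtain ⟨y, hy⟩ := Abelian.Ext.contravariant_sequence_exact₃ (scOf_se f g h hf hg) _ x (hY _)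
    (Nat.add_comm 1 n)
  rw [← hy, hX y]
  exact Abelian.Ext.comp_zero _ _ _ _ _

theorem con_left {n : ℕ} (hY : EV R n Y K) (hZ : EV R (n+1) Z K) : EV R n X K := by
  rw [EV_iff] at *
  intro x
  obtain ⟨y, hy⟩ := Abelian.Ext.contravariant_sequence_exact₁ (scOf_se f g h hf hg) _ x
    (Nat.add_comm 1 n) (hZ _)
  rw [← hy, hY y]
  exact Abelian.Ext.comp_zero _ _ _ _ _

theorem con_mid {n : ℕ} (hX : EV R n X K) (hZ : EV R n Z K) : EV R n Y K := by
  rw [EV_iff] at *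
  intro x
  obtain ⟨y, hy⟩ := Abelian.Ext.contravariant_sequence_exact₂ (scOf_se f g h hf hg) _ x (hX _)
  rw [← hy, hZ y]
  exact Abelian.Ext.comp_zero _ _ _ _ _

/-- extension of maps if Ext^1 vanishes -/
theorem ext_of_EV_one (hZ : EV R 1 Z K) (φ : X →ₗ[R] K) : ∃ ψ : Y →ₗ[R] K, ψ ∘ₗ f = φ := by
  rw [EV_iff] at hZ
  obtain ⟨y, hy⟩ := Abelian.Ext.contravariant_sequence_exact₁ (scOf_se f g h hf hg) _
    (Abelian.Ext.mk₀ (ModuleCat.ofHom φ)) (Nat.add_comm 1 0) (hZ _)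
  obtain ⟨y, rfl⟩ := (Abelian.Ext.mk₀_bijective _ _).2 y
  refine ⟨y.hom, ?_⟩
  rw [Abelian.Ext.mk₀_comp_mk₀] at hy
  have := (Abelian.Ext.mk₀_bijective _ _).1 hy
  exact congrArg ModuleCat.Hom.hom this

theorem EV_one_of_ext (hY : EV R 1 Y K) (H : ∀ φ : X →ₗ[R] K, ∃ ψ : Y →ₗ[R] K, ψ ∘ₗ f = φ) :
    EV R 1 Z K := by
  rw [EV_iff] at *
  intro x
  have hS := scOf_se f g h hf hg
  obtain ⟨y, hy⟩ := Abelian.Ext.contravariant_sequence_exact₃ hS _ x (hY _)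
    (Nat.add_comm 1 0)
  obtain ⟨φ, rfl⟩ := (Abelian.Ext.mk₀_bijective _ _).2 y
  obtain ⟨ψ, hψ⟩ := H φ.hom
  have : φ = (scOf f g h).f ≫ ModuleCat.ofHom ψ := by
    ext x; exact (LinearMap.congr_fun hψ x).symm
  rw [← hy, this, ← Abelian.Ext.mk₀_comp_mk₀]
  exact hS.extClass_comp_assoc _
end

theorem EV_proj {n : ℕ} [Module.Projective R X] : EV R (n+1) X Y := by
  rw [EV_iff]
  intro x
  have : Projective (ModuleCat.of R X) := ModuleCat.projective_of_categoryTheory_projective _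
  exact Abelian.Ext.eq_zero_of_projective _

theorem EV_zero_of_inj (f : X →ₗ[R] Y) (hf : Function.Injective f) (hY : EV R 0 K Y) :
    EV R 0 K X := by
  rw [EV_zero] at *
  intro φ
  ext x
  apply hf
  simpa using LinearMap.congr_fun (hY (f ∘ₗ φ)) x

end EVsec

section Csec
variable {R : Type u} [CommRing R]
variable {K X Y Z P : Type u} [AddCommGroup X] [Module R X] [AddCommGroup Y] [Module R Y]
  [AddCommGroup Z] [Module R Z] [AddCommGroup K] [Module R K] [AddCommGroup P] [Module R P]

theorem ext_eq_zero_of_dual [Module.Finite R P] [Module.Projective R P] {n : ℕ}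
    (x : Abelian.Ext.{u} (ModuleCat.of R K) (ModuleCat.of R P) n)
    (h : ∀ φ : P →ₗ[R] R, x.comp (Abelian.Ext.mk₀ (ModuleCat.ofHom φ)) (add_zero n) = 0) :
    x = 0 := by
  obtain ⟨m, f, g, hf, hg, hfg⟩ := Module.Finite.exists_comp_eq_id_of_projective R P
  have h2 : 𝟙 (ModuleCat.of R P) = ∑ i, ModuleCat.ofHom (LinearMap.proj i ∘ₗ g) ≫
      ModuleCat.ofHom (LinearMap.toSpanSingleton R P (f (Pi.single i 1))) := by
    ext p
    have := LinearMap.congr_fun hfg p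
    simp only [LinearMap.comp_apply, LinearMap.id_apply] at this
    conv_lhs => rw [ModuleCat.hom_id, LinearMap.id_apply, ← this,
      ← Finset.univ_sum_single (g p), map_sum]
    rw [ModuleCat.hom_sum, LinearMap.sum_apply]
    refine Finset.sum_congr rfl fun i _ => ?_
    simp [← map_smul, ← Pi.single_smul]
  calc x = x.comp (Abelian.Ext.mk₀ (𝟙 _)) (add_zero n) := by simp
    _ = 0 := by
      rw [h2, Abelian.Ext.mk₀_sum, Abelian.Ext.comp_sum]
      refine Finset.sum_eq_zero fun i _ => ?_
      rw [← Abelian.Ext.mk₀_comp_mk₀, ← Abelian.Ext.comp_assoc_of_third_deg_zero, h]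
      simp

theorem EV_finproj [Module.Finite R P] [Module.Projective R P] {n : ℕ} (h : EV R n K R) :
    EV R n K P := by
  rw [EV_iff] at *
  exact fun x => ext_eq_zero_of_dual x fun φ => h _

/-- `r • x` for `x` in Ext from `R/I` -/
theorem ext_smul_zero {I : Ideal R} {n : ℕ}
    (x : Abelian.Ext.{u} (ModuleCat.of R (R ⧸ I)) (ModuleCat.of R R) n) (r : R) (hr : r ∈ I)
    (φ : R →ₗ[R] R) (hφ : φ 1 = r) :
    x.comp (Abelian.Ext.mk₀ (ModuleCat.ofHom φ)) (add_zero n) = 0 := by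
  have h1 : ModuleCat.ofHom φ = r • 𝟙 (ModuleCat.of R R) := by
    ext; simp [hφ]
  have h2 : r • 𝟙 (ModuleCat.of R (R ⧸ I)) = 0 := by
    refine ModuleCat.hom_ext (LinearMap.ext fun (x : R ⧸ I) => ?_)
    obtain ⟨x, rfl⟩ := Ideal.Quotient.mk_surjective x
    change r • (Ideal.Quotient.mk I x) = 0
    rw [← Ideal.Quotient.mk_eq_mk, ← Submodule.Quotient.mk_smul, Submodule.Quotient.mk_eq_zero]
    exact I.mul_mem_right _ hr
  have smul_eq : r • x = (Abelian.Ext.mk₀ (r • 𝟙 (ModuleCat.of R (R ⧸ I)))).comp x (zero_add n) := by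
    simp [Abelian.Ext.mk₀_smul]
  rw [h1, Abelian.Ext.mk₀_smul, Abelian.Ext.comp_smul, Abelian.Ext.comp_mk₀_id, smul_eq, h2]
  simp

/-- projective resolution -/
structure PR (R : Type u) [CommRing R] (X : Type u) [AddCommGroup X] [Module R X] where
  P : ℕ → ModuleCat.{u} R
  projective : ∀ i, Module.Projective R (P i)
  d : (i : ℕ) → (↥(P (i + 1)) →ₗ[R] ↥(P i))
  ε : ↥(P 0) →ₗ[R] X
  surj : Function.Surjective ε
  exact0 : Function.Exact (d 0) ε
  exact : ∀ i, Function.Exact (d (i+1)) (d i)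

/-- shift -/
def PR.shift (F : PR R X) : PR R (LinearMap.ker F.ε) where
  P i := F.P (i+1)
  projective i := F.projective (i+1)
  d i := F.d (i+1)
  ε := (F.d 0).codRestrict _ (fun x => F.exact0.apply_apply_eq_zero x)
  surj := by
    rintro ⟨x, hx⟩
    obtain ⟨y, rfl⟩ := (F.exact0 x).1 hx
    exact ⟨y, rfl⟩
  exact0 := by
    intro x
    rw [← F.exact 0 x]
    exact Subtype.ext_iff
  exact i := F.exact (i+1)

theorem PR.EV_succ_iff (F : PR R X) (n : ℕ) : EV R (n+1) X Y ↔
    ∀ f : F.P (n+1) →ₗ[R] Y, f ∘ₗ F.d (n+1) = 0 → ∃ g : F.P n →ₗ[R] Y, f = g ∘ₗ F.d n := by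
  induction n generalizing X with
  | zero =>
    have := F.projective 0
    have hex : Function.Exact (LinearMap.ker F.ε).subtype F.ε := LinearMap.exact_subtype_ker_map _
    constructor
    · intro h f hf
      have hle : LinearMap.ker (F.d 0) ≤ LinearMap.ker f := by
        intro x hx
        obtain ⟨y, rfl⟩ := (F.exact 0 x).1 hx
        exact LinearMap.congr_fun hf y
      obtain ⟨φ, hφ⟩ : ∃ φ : LinearMap.ker F.ε →ₗ[R] Y, φ ∘ₗ F.shift.ε = f := by
        refine ⟨((LinearMap.ker F.shift.ε).liftQ f ?_) ∘ₗ
          (F.shift.ε.quotKerEquivOfSurjective F.shift.surj).symm.toLinearMap, ?_⟩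
        · intro x hx
          exact hle (congrArg Subtype.val hx)
        · ext x
          have : (F.shift.ε.quotKerEquivOfSurjective F.shift.surj).symm (F.shift.ε x) =
            Submodule.Quotient.mk x := by
            rw [LinearEquiv.symm_apply_eq]; rfl
          simp only [LinearMap.comp_apply, LinearEquiv.coe_coe, this]
          rfl
      obtain ⟨ψ, hψ⟩ := ext_of_EV_one _ _ hex Subtype.val_injective F.surj h φ
      refine ⟨ψ, ?_⟩
      rw [← hφ, ← hψ]; rfl
    · intro H
      refine EV_one_of_ext _ _ hex Subtype.val_injective F.surj EV_proj fun φ => ?_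
      obtain ⟨g, hg⟩ := H (φ ∘ₗ F.shift.ε) (by
        ext x
        have := F.shift.exact0.apply_apply_eq_zero x
        simp only [LinearMap.comp_apply, LinearMap.zero_apply]
        exact (congrArg φ this).trans (map_zero φ))
      refine ⟨g, ?_⟩
      ext x
      obtain ⟨y, rfl⟩ := F.shift.surj x
      exact (LinearMap.congr_fun hg y).symm
  | succ n ih =>
    have := F.projective 0
    have hex : Function.Exact (LinearMap.ker F.ε).subtype F.ε := LinearMap.exact_subtype_ker_map _
    have : EV R (n+2) X Y ↔ EV R (n+1) (LinearMap.ker F.ε) Y :=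
      ⟨fun h => con_left _ _ hex Subtype.val_injective F.surj EV_proj h,
       fun h => con_right _ _ hex Subtype.val_injective F.surj EV_proj h⟩
    rw [this, ih F.shift]
    rfl

section T
variable (C : ℕ → ModuleCat.{u} R) (δ : ∀ i, C i →ₗ[R] C (i+1))

theorem range_exact (i : ℕ) (h : Function.Exact (δ i) (δ (i+1))) :
    Function.Exact (LinearMap.range (δ i)).subtype (δ (i+1)).rangeRestrict := by
  intro x
  have h2 := h x
  constructor
  · intro hx
    obtain ⟨y, rfl⟩ := h2.1 (congrArg Subtype.val hx)
    exact ⟨⟨_, y, rfl⟩, rfl⟩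
  · rintro ⟨⟨_, y, rfl⟩, rfl⟩
    exact Subtype.ext (h2.2 ⟨y, rfl⟩)

theorem depth_T1 (j i : ℕ) (hex : ∀ l < j, Function.Exact (δ (i+l)) (δ (i+l+1)))
    (hC : ∀ l, ∀ j' ≤ j, EV R j' K (C l)) : EV R j K (LinearMap.range (δ i)) := by
  induction j generalizing i with
  | zero => exact EV_zero_of_inj (LinearMap.range (δ i)).subtype Subtype.val_injective (hC _ 0 le_rfl)
  | succ j ih =>
    refine cov_left _ _ (range_exact C δ i (hex 0 (Nat.succ_pos _))) Subtype.val_injective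
      (LinearMap.surjective_rangeRestrict _) (hC _ _ le_rfl) (ih (i+1) ?_ ?_)
    · intro l hl
      have := hex (l+1) (by omega)
      have e : i + 1 + l = i + (l+1) := by omega
      rw [e]; exact this
    · intro l j' hj'
      exact hC l j' (by omega)

theorem depth_T2 (m j i : ℕ) (hm : i + j = m)
    (hex : ∀ l < j, Function.Exact (δ (i+l)) (δ (i+l+1)))
    (hC : ∀ l, ∀ j' ≤ j, EV R j' K (C l))
    (hs : ¬ EV R 0 K (C (m+1) ⧸ LinearMap.range (δ m))) :
    ¬ EV R (j+1) K (LinearMap.range (δ i)) := by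
  induction j generalizing i with
  | zero =>
    obtain rfl : i = m := hm
    intro h
    exact hs (cov_right _ _ (LinearMap.exact_subtype_mkQ _) Subtype.val_injective
      (Submodule.mkQ_surjective _) (hC _ _ le_rfl) h)
  | succ j ih =>
    intro h
    refine ih (i+1) (by omega) ?_ ?_ (cov_right _ _ (range_exact C δ i (hex 0 (Nat.succ_pos _)))
      Subtype.val_injective (LinearMap.surjective_rangeRestrict _) (hC _ _ le_rfl) h)
    · intro l hl
      have := hex (l+1) (by omega)
      have e : i + 1 + l = i + (l+1) := by omega
      rw [e]; exact this
    · intro l j' hj'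
      exact hC l j' (by omega)
end T
end Csec

section Dsec
open IsLocalRing
variable {R : Type u} [CommRing R]
variable {X Y Z P : Type u} [AddCommGroup X] [Module R X] [AddCommGroup Y] [Module R Y]
  [AddCommGroup Z] [Module R Z] [AddCommGroup P] [Module R P]

theorem mem_smul_top_of_dual [Module.Finite R P] [Module.Projective R P] (I : Ideal R) (x : P)
    (h : ∀ φ : P →ₗ[R] R, φ x ∈ I) : x ∈ I • (⊤ : Submodule R P) := by
  obtain ⟨m, f, g, hf, hg, hfg⟩ := Module.Finite.exists_comp_eq_id_of_projective R P
  have := LinearMap.congr_fun hfg x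
  simp only [LinearMap.comp_apply, LinearMap.id_apply] at this
  rw [← this, ← Finset.univ_sum_single (g x), map_sum]
  refine Submodule.sum_mem _ fun i _ => ?_
  have : Pi.single i (g x i) = (g x i) • (Pi.single i 1 : Fin m → R) := by
    rw [← Pi.single_smul]; simp
  rw [this, map_smul]
  exact Submodule.smul_mem_smul (h (LinearMap.proj i ∘ₗ g)) trivial

theorem superfluous_of_dual [IsLocalRing R] [Module.Finite R P] [Module.Projective R P]
    (N : Submodule R P) (h : ∀ x ∈ N, ∀ φ : P →ₗ[R] R, φ x ∈ maximalIdeal R) :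
    N.IsSuperfluous := by
  intro K hK
  rw [eq_top_iff]
  refine Submodule.le_of_le_smul_of_le_jacobson_bot (I := maximalIdeal R) Module.Finite.fg_top
    (maximalIdeal_le_jacobson _) ?_
  rw [← hK]
  refine sup_le le_sup_left ?_
  rw [hK]
  exact le_trans (fun x hx => mem_smul_top_of_dual _ x (h x hx)) le_sup_right

theorem exists_minCover [IsLocalRing R] [Module.Finite R X] :
    ∃ (P : ModuleCat.{u} R) (π : P →ₗ[R] X), Module.Projective R P ∧ Module.Finite R P ∧
      Function.Surjective π ∧ (LinearMap.ker π).IsSuperfluous := by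
  classical
  let k := ResidueField R
  let b := Module.finBasis k (TensorProduct R k X)
  have hsurj : Function.Surjective (TensorProduct.mk R k X 1) :=
    TensorProduct.mk_surjective R X k residue_surjective
  choose v hv using fun i => hsurj (b i)
  let n := Module.finrank k (TensorProduct R k X)
  let π : (Fin n → R) →ₗ[R] X := Fintype.linearCombination R v
  have hπ : Function.Surjective π := by
    rw [← LinearMap.range_eq_top, Fintype.range_linearCombination]
    exact span_eq_top_of_tmul_eq_basis v b hv
  refine ⟨ModuleCat.of R (Fin n → R), π, inferInstanceAs (Module.Projective R (Fin n → R)),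
    inferInstanceAs (Module.Finite R (Fin n → R)), hπ, ?_⟩
  refine superfluous_of_dual (P := (Fin n → R)) _ fun r hr φ => ?_
  have h1 : ∀ i, r i ∈ maximalIdeal R := by
    intro i
    have h2 : ∑ i, residue R (r i) • b i = 0 := by
      have : π r = 0 := hr
      have h3 := congrArg (TensorProduct.mk R k X 1) this
      rw [Fintype.linearCombination_apply, map_sum, map_zero] at h3
      rw [← h3]
      refine Finset.sum_congr rfl fun i _ => ?_
      rw [map_smul, hv]
      rfl
    exact (residue_eq_zero_iff _).1 (Fintype.linearIndependent_iff.1 b.linearIndependent _ h2 i)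
  rw [← Finset.univ_sum_single r, map_sum]
  refine Ideal.sum_mem _ fun i _ => ?_
  have : Pi.single i (r i) = (r i) • (Pi.single i 1 : Fin n → R) := by
    rw [← Pi.single_smul]; simp
  rw [this, map_smul]
  exact Ideal.mul_mem_right _ _ (h1 i)

theorem exists_minRes [IsLocalRing R] [IsNoetherianRing R] [Module.Finite R X] :
    Nonempty (MinRes R X) := by
  classical
  choose P π hproj hfin hsurj hsup using
    fun (S : {S : ModuleCat.{u} R // Module.Finite R S}) =>
      have := S.2; exists_minCover (R := R) (X := S.1)
  let nxt : {S : ModuleCat.{u} R // Module.Finite R S} → {S : ModuleCat.{u} R // Module.Finite R S} :=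
    fun S => ⟨ModuleCat.of R (LinearMap.ker (π S)),
      have := hfin S; inferInstanceAs (Module.Finite R (LinearMap.ker (π S)))⟩
  let S : ℕ → {S : ModuleCat.{u} R // Module.Finite R S} :=
    fun n => Nat.rec ⟨ModuleCat.of R X, inferInstanceAs (Module.Finite R X)⟩ (fun _ s => nxt s) n
  let dd : (i : ℕ) → (P (S (i+1)) →ₗ[R] P (S i)) :=
    fun i => (LinearMap.ker (π (S i))).subtype ∘ₗ (π (S (i+1)))
  have hr : ∀ i, LinearMap.range (dd i) = LinearMap.ker (π (S i)) := by
    intro i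
    have : LinearMap.range (π (S (i+1))) = ⊤ := LinearMap.range_eq_top.2 (hsurj _)
    simp only [dd]
    rw [LinearMap.range_comp]
    erw [this]
    simp
  have hk : ∀ i, LinearMap.ker (dd i) = LinearMap.ker (π (S (i+1))) := by
    intro i
    exact LinearMap.ker_comp_of_ker_eq_bot _ (Submodule.ker_subtype _)
  exact ⟨{
    P := fun i => P (S i)
    projective := fun i => hproj _
    finite := fun i => hfin _
    d := dd
    ε := π (S 0)
    surj := hsurj _
    exact0 := hr 0
    exact := fun i => (hr (i+1)).trans (hk i).symm
    min_eps := hsup _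
    min_d := fun i => by rw [hk]; exact hsup _ }⟩

/-- cons -/
def MinRes.cons [Module.Finite R P] [Module.Projective R P] (π : P →ₗ[R] X)
    (hs : Function.Surjective π) (hk : (LinearMap.ker π).IsSuperfluous)
    (H : MinRes R (LinearMap.ker π)) : MinRes R X where
  P := fun i => match i with
    | 0 => ModuleCat.of R P
    | i+1 => H.P i
  projective := fun i => match i with
    | 0 => inferInstanceAs (Module.Projective R P)
    | i+1 => H.projective i
  finite := fun i => match i with
    | 0 => inferInstanceAs (Module.Finite R P)
    | i+1 => H.finite i
  d := fun i => match i with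
    | 0 => (LinearMap.ker π).subtype ∘ₗ H.ε
    | i+1 => H.d i
  ε := π
  surj := hs
  exact0 := by
    change LinearMap.range ((LinearMap.ker π).subtype ∘ₗ H.ε) = _
    rw [LinearMap.range_comp, LinearMap.range_eq_top.2 H.surj]
    simp
  exact := fun i => match i with
    | 0 => H.exact0.trans (LinearMap.ker_comp_of_ker_eq_bot _ (Submodule.ker_subtype _)).symm
    | i+1 => H.exact i
  min_eps := hk
  min_d := fun i => match i with
    | 0 => by
      have := (LinearMap.ker_comp_of_ker_eq_bot H.ε (Submodule.ker_subtype (LinearMap.ker π)))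
      change (LinearMap.ker ((LinearMap.ker π).subtype ∘ₗ H.ε)).IsSuperfluous
      rw [this]; exact H.min_eps
    | i+1 => H.min_d i

/-- forget minimality -/
def MinRes.toPR (F : MinRes R X) : PR R X where
  P := F.P
  projective := F.projective
  d := F.d
  ε := F.ε
  surj := F.surj
  exact0 := LinearMap.exact_iff.2 F.exact0.symm
  exact i := LinearMap.exact_iff.2 (F.exact i).symm

end Dsec

section Esec
variable {R : Type u} [CommRing R] (S : Submonoid R)
variable {X Y Z P : Type u} [AddCommGroup X] [Module R X] [AddCommGroup Y] [Module R Y]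
  [AddCommGroup Z] [Module R Z] [AddCommGroup P] [Module R P]

/-- localized functional -/
noncomputable def lmapD (f : X →ₗ[R] R) : LocalizedModule S X →ₗ[Localization S] Localization S :=
  IsLocalizedModule.mapExtendScalars S (LocalizedModule.mkLinearMap S X)
    (Algebra.linearMap R (Localization S)) (Localization S) f

theorem lmapD_mk (f : X →ₗ[R] R) (x : X) :
    lmapD S f (LocalizedModule.mkLinearMap S X x) = algebraMap R (Localization S) (f x) := by
  simp only [lmapD, IsLocalizedModule.mapExtendScalars_apply_apply]
  exact IsLocalizedModule.map_apply _ _ _ _ _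

theorem lext {N : Type*} [AddCommGroup N] [Module (Localization S) N]
    (h1 h2 : LocalizedModule S X →ₗ[Localization S] N)
    (h : ∀ x, h1 (LocalizedModule.mkLinearMap S X x) = h2 (LocalizedModule.mkLinearMap S X x)) :
    h1 = h2 := by
  ext z
  obtain ⟨⟨x, s⟩, hs⟩ := IsLocalizedModule.surj S (LocalizedModule.mkLinearMap S X) z
  have hu := IsLocalization.map_units (Localization S) s
  have hs' : algebraMap R (Localization S) s • z = LocalizedModule.mkLinearMap S X x := by
    rw [← hs, algebraMap_smul]; rfl
  have := h x
  rw [← hs', map_smul, map_smul] at this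
  exact hu.smul_left_cancel.1 this

theorem lift_lmapD [Module.FinitePresentation R X]
    (h : LocalizedModule S X →ₗ[Localization S] Localization S) :
    ∃ (g : X →ₗ[R] R) (s : S), ∀ x, algebraMap R (Localization S) (g x) =
      algebraMap R (Localization S) s * h (LocalizedModule.mkLinearMap S X x) := by
  obtain ⟨g, s, hg⟩ := Module.FinitePresentation.exists_lift_of_isLocalizedModule S
    (Algebra.linearMap R (Localization S)) (h.restrictScalars R ∘ₗ LocalizedModule.mkLinearMap S X)
  refine ⟨g, s, fun x => ?_⟩
  have := LinearMap.congr_fun hg x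
  simp only [LinearMap.comp_apply, Algebra.linearMap_apply, LinearMap.smul_apply] at this
  rw [this, ← Algebra.smul_def]
  rfl

theorem eq_of_loc [Module.Finite R X] (g1 g2 : X →ₗ[R] R)
    (h : ∀ x, algebraMap R (Localization S) (g1 x) = algebraMap R (Localization S) (g2 x)) :
    ∃ s : S, (s : R) • g1 = (s : R) • g2 :=
  Module.Finite.exists_smul_of_comp_eq_of_isLocalizedModule S
    (Algebra.linearMap R (Localization S)) g1 g2 (LinearMap.ext h)

/-- dual commutes with localization -/
noncomputable def locDualEquiv [Module.FinitePresentation R X] :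
    LocalizedModule S (Module.Dual R X) ≃ₗ[Localization S]
      Module.Dual (Localization S) (LocalizedModule S X) :=
  LinearEquiv.extendScalarsOfIsLocalization S (Localization S)
  (IsLocalizedModule.linearEquiv S (LocalizedModule.mkLinearMap S (Module.Dual R X))
    (IsLocalizedModule.mapExtendScalars S (LocalizedModule.mkLinearMap S X)
    (Algebra.linearMap R (Localization S)) (Localization S)))

theorem locDualEquiv_mk [Module.FinitePresentation R X] (f : Module.Dual R X) :
    locDualEquiv S (LocalizedModule.mkLinearMap S (Module.Dual R X) f) = lmapD S f :=
  IsLocalizedModule.linearEquiv_apply S _ _ f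

/-- localized resolution -/
noncomputable def PR.loc (F : PR R X) : PR (Localization S) (LocalizedModule S X) where
  P i := ModuleCat.of _ (LocalizedModule S (F.P i))
  projective i := have := F.projective i
    Module.projective_of_isLocalizedModule S (LocalizedModule.mkLinearMap S (F.P i))
  d i := LocalizedModule.map S (F.d i)
  ε := LocalizedModule.map S F.ε
  surj := LocalizedModule.map_surjective S _ F.surj
  exact0 := LocalizedModule.map_exact S _ _ F.exact0
  exact i := LocalizedModule.map_exact S _ _ (F.exact i)

theorem loc_cobound [IsNoetherianRing R] (F : PR R X) (hfin : ∀ i, Module.Finite R (F.P i)) (i : ℕ)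
    (hEV : EV (Localization S) (i+1) (LocalizedModule S X) (Localization S))
    (f : F.P (i+1) →ₗ[R] R) (hf : f ∘ₗ F.d (i+1) = 0) :
    ∃ (s : S) (g : F.P i →ₗ[R] R), (s : R) • f = g ∘ₗ F.d i := by
  have := hfin i
  have := hfin (i+1)
  have : Module.FinitePresentation R (F.P i) := Module.finitePresentation_of_finite R _
  obtain ⟨g, hg⟩ := ((F.loc S).EV_succ_iff i).1 hEV (lmapD S f) (by
    apply lext
    intro x
    change lmapD S f (LocalizedModule.map S (F.d (i+1)) _) = 0
    rw [LocalizedModule.mkLinearMap_apply, LocalizedModule.map_mk,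
      ← LocalizedModule.mkLinearMap_apply, lmapD_mk, ← LinearMap.comp_apply, hf]
    simp)
  obtain ⟨g', s, hg'⟩ := lift_lmapD S (X := F.P i) g
  obtain ⟨s', hs'⟩ := eq_of_loc S (g' ∘ₗ F.d i) ((s : R) • f) (by
    intro x
    rw [LinearMap.comp_apply, hg', LinearMap.smul_apply, smul_eq_mul, map_mul, ← lmapD_mk, hg]
    congr 1
    change _ = g (LocalizedModule.map S (F.d i) _)
    rw [LocalizedModule.mkLinearMap_apply,LocalizedModule.mkLinearMap_apply,
      LocalizedModule.map_mk]
    rfl)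
  refine ⟨s' * s, (s' : R) • g', ?_⟩
  rw [LinearMap.smul_comp, hs', Submonoid.coe_mul, mul_smul]

theorem loc_torsionless [Module.FinitePresentation R X]
    (h : Function.Injective (Module.Dual.eval (Localization S) (LocalizedModule S X)))
    (x : X) (hx : Module.Dual.eval R X x = 0) : ∃ s : S, (s : R) • x = 0 := by
  have h0 : LocalizedModule.mkLinearMap S X x = 0 := by
    apply h
    rw [map_zero]
    ext φ
    obtain ⟨g, s, hg⟩ := lift_lmapD S φ
    have := hg x
    rw [show g x = 0 from LinearMap.congr_fun hx g, map_zero] at this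
    exact (IsLocalization.map_units (Localization S) s).mul_right_eq_zero.1 this.symm
  obtain ⟨s, hs⟩ := (IsLocalizedModule.eq_zero_iff S (LocalizedModule.mkLinearMap S X)).1 h0
  exact ⟨s, hs⟩

theorem loc_reflexive [Module.FinitePresentation R X] [Module.Finite R (Module.Dual R X)]
    (h : Function.Surjective (Module.Dual.eval (Localization S) (LocalizedModule S X)))
    (φ : Module.Dual R X →ₗ[R] R) : ∃ (s : S) (y : X), (s : R) • φ = Module.Dual.eval R X y := by
  obtain ⟨z, hz⟩ := h (lmapD S φ ∘ₗ (locDualEquiv S (X := X)).symm.toLinearMap)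
  obtain ⟨⟨x, s⟩, hs⟩ := IsLocalizedModule.surj S (LocalizedModule.mkLinearMap S X) z
  have hs' : algebraMap R (Localization S) s • z = LocalizedModule.mkLinearMap S X x := by
    rw [← hs, algebraMap_smul]; rfl
  obtain ⟨s', hs''⟩ := eq_of_loc S ((s : R) • φ) (Module.Dual.eval R X x) (by
    intro f
    have h1 := LinearMap.congr_fun hz (lmapD S f)
    rw [Module.Dual.eval_apply, LinearMap.comp_apply, ← locDualEquiv_mk, LinearEquiv.coe_coe,
      LinearEquiv.symm_apply_apply, lmapD_mk, locDualEquiv_mk] at h1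
    rw [LinearMap.smul_apply, smul_eq_mul, map_mul, ← h1, Module.Dual.eval_apply, ← lmapD_mk,
      ← hs', map_smul, smul_eq_mul])
  exact ⟨s' * s, (s' : R) • x, by rw [Submonoid.coe_mul, mul_smul, hs'', map_smul]⟩

end Esec

section Fsec
open IsLocalRing
variable {R : Type u} [CommRing R] [IsLocalRing R]
variable {X Y Z P : Type u} [AddCommGroup X] [Module R X] [AddCommGroup Y] [Module R Y]
  [AddCommGroup Z] [Module R Z] [AddCommGroup P] [Module R P]

theorem socle_of_loc [IsNoetherianRing R] (x : X) (hx : x ≠ 0)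
    (h : ∀ (p : Ideal R), p.IsPrime → p ≠ maximalIdeal R → ∃ s : R, s ∉ p ∧ s • x = 0) :
    ∃ y : X, y ≠ 0 ∧ ∀ a ∈ maximalIdeal R, a • y = 0 := by
  obtain ⟨P, hP, hle⟩ := exists_le_isAssociatedPrime_of_isNoetherianRing R x hx
  rw [isAssociatedPrime_iff] at hP
  obtain ⟨hprime, y, hy⟩ := hP
  by_cases hPm : P = maximalIdeal R
  · refine ⟨y, ?_, fun a ha => ?_⟩
    · rintro rfl
      apply hprime.ne_top
      rw [hy, Ideal.eq_top_iff_one]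
      simp
    · rw [← hPm, hy] at ha
      simpa using ha
  · obtain ⟨s, hs, hsx⟩ := h P hprime hPm
    exact absurd (hle (by simpa using hsx)) hs

theorem EV_zero_k_iff : EV R 0 (R ⧸ maximalIdeal R) X ↔
    ∀ y : X, (∀ a ∈ maximalIdeal R, a • y = 0) → y = 0 := by
  rw [EV_zero]
  constructor
  · intro h y hy
    have := h ((maximalIdeal R).liftQ (LinearMap.toSpanSingleton R X y) (by
      intro a ha; simpa using hy a ha))
    have h2 := LinearMap.congr_fun this (Submodule.Quotient.mk (1 : R))
    rw [Submodule.liftQ_apply] at h2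
    simpa using h2
  · intro h f
    ext
    apply h
    intro a ha
    simp only [LinearMap.comp_apply, ← map_smul]
    have : (maximalIdeal R).mkQ (a • 1) = 0 := by
      rw [Submodule.mkQ_apply, Submodule.Quotient.mk_eq_zero]
      simpa using ha
    rw [this, map_zero]

theorem pow_tors (h : EV R 0 (R ⧸ maximalIdeal R) X) (n : ℕ) (x : X)
    (hx : ∀ a ∈ maximalIdeal R ^ n, a • x = 0) : x = 0 := by
  rw [EV_zero_k_iff] at h
  induction n generalizing x with
  | zero => simpa using hx 1 (by simp)
  | succ n ih =>
    apply h
    intro b hb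
    apply ih
    intro a ha
    rw [← mul_smul]
    exact hx _ (by rw [pow_succ]; exact Ideal.mul_mem_mul ha hb)

theorem gamma_bot (h : EV R 0 (R ⧸ maximalIdeal R) X) :
    gammaTorsion R (maximalIdeal R) X = ⊥ := by
  rw [eq_bot_iff]
  rintro x ⟨n, hn⟩
  exact pow_tors h n x hn

theorem EV_zero_of_gamma (h : gammaTorsion R (maximalIdeal R) X = ⊥) :
    EV R 0 (R ⧸ maximalIdeal R) X := by
  rw [EV_zero_k_iff]
  intro y hy
  have : y ∈ gammaTorsion R (maximalIdeal R) X := ⟨1, by simpa using hy⟩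
  simpa [h] using this

theorem EV_dual_zero [Module.Finite R P] [Module.Projective R P]
    (h : EV R 0 (R ⧸ maximalIdeal R) R) : EV R 0 (R ⧸ maximalIdeal R) (Module.Dual R P) :=
  EV_finproj h

variable {M : Type u} [AddCommGroup M] [Module R M]

theorem lambda_EV0 (h : EV R 0 (R ⧸ maximalIdeal R) R) (F : MinRes R M) :
    EV R 0 (R ⧸ maximalIdeal R) F.lambdaMod := by
  have := F.finite 1
  have := F.projective 1
  exact EV_zero_of_inj (LinearMap.range (F.d 0).dualMap).subtype Subtype.val_injective
    (EV_dual_zero h)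

/-- the localized hypothesis -/
def PunctG (R : Type u) [CommRing R] [IsLocalRing R] (M : Type u) [AddCommGroup M]
    [Module R M] : Prop :=
  ∀ (p : Ideal R) (h : p.IsPrime), p ≠ IsLocalRing.maximalIdeal R →
    haveI := h; IsGDimZero (Localization p.primeCompl) (LocalizedModule p.primeCompl M)

theorem gdim_zero_iff (A : Type u) [CommRing A] (N : Type u) [AddCommGroup N] [Module A N]
    (h : GDim A N = 0) : IsGDimZero A N := by
  unfold GDim at h
  have hne : {n : ℕ∞ | ∃ k : ℕ, n = k ∧ GDimLE A k (ModuleCat.of A N)}.Nonempty := by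
    by_contra hc
    rw [Set.not_nonempty_iff_eq_empty] at hc
    rw [hc] at h
    simp at h
  have := csInf_mem hne
  rw [h] at this
  obtain ⟨k, hk, hk2⟩ := this
  have : k = 0 := by exact_mod_cast hk.symm
  subst this
  exact hk2

theorem torsionless [IsNoetherianRing R] [Module.Finite R M] (hp : PunctG R M)
    (h0 : EV R 0 (R ⧸ maximalIdeal R) M) : Function.Injective (Module.Dual.eval R M) := by
  have : Module.FinitePresentation R M := Module.finitePresentation_of_finite R _
  rw [injective_iff_map_eq_zero]
  intro x hx
  by_contra hne
  obtain ⟨y, hy, hy2⟩ := socle_of_loc x hne (by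
    intro p hprime hpm
    obtain ⟨s, hs⟩ := loc_torsionless p.primeCompl (hp p hprime hpm).2.1.1 x hx
    exact ⟨s, s.2, hs⟩)
  exact hy (EV_zero_k_iff.1 h0 y hy2)

theorem stable_dual [Module.Finite R M] (hs : IsStableModule R M) (f : M →ₗ[R] R) (x : M) :
    f x ∈ maximalIdeal R := by
  by_contra hu
  rw [mem_maximalIdeal, mem_nonunits_iff, not_not] at hu
  obtain ⟨u, hu⟩ := hu
  let y : M := ((u⁻¹ : Rˣ) : R) • x
  have hy : f y = 1 := by simp [y, ← hu]
  let σ : R →ₗ[R] M := LinearMap.toSpanSingleton R M y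
  have hσ : f ∘ₗ σ = LinearMap.id := by ext; simp [σ, hy]
  have hinj : Function.Injective σ := by
    intro a b hab
    have := congrArg f hab
    simpa [σ, hy] using this
  have hc : IsCompl (LinearMap.range σ) (LinearMap.ker f) := by
    have := LinearMap.isCompl_of_proj (f := (LinearEquiv.ofInjective σ hinj).toLinearMap ∘ₗ f) (by
      rintro ⟨_, a, rfl⟩
      have : f (σ a) = a := LinearMap.congr_fun hσ a
      apply Subtype.ext
      simp [this])
    rwa [LinearMap.ker_comp_of_ker_eq_bot _ (LinearEquiv.ker _)] at this
  have := hs (LinearMap.range σ) (Module.Projective.of_equiv (LinearEquiv.ofInjective σ hinj)) ⟨_, hc⟩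
  have hyr : y ∈ LinearMap.range σ := ⟨1, by simp [σ]⟩
  rw [this] at hyr
  have : y = 0 := hyr
  rw [this, map_zero] at hy
  exact zero_ne_one hy


/-- cover of the linked module -/
noncomputable def lamCover (F : MinRes R M) : Module.Dual R (F.P 0) →ₗ[R] F.lambdaMod :=
  (F.d 0).dualMap.rangeRestrict

theorem mem_ker_lamCover (F : MinRes R M) (f : Module.Dual R (F.P 0)) :
    f ∈ LinearMap.ker (lamCover F) ↔ ∃ h : Module.Dual R M, h ∘ₗ F.ε = f := by
  have h1 : f ∈ LinearMap.ker (lamCover F) ↔ f ∘ₗ F.d 0 = 0 := by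
    rw [LinearMap.mem_ker]
    exact Subtype.ext_iff
  rw [h1]
  constructor
  · intro h
    refine ⟨((LinearMap.ker F.ε).liftQ f ?_) ∘ₗ
          (F.ε.quotKerEquivOfSurjective F.surj).symm.toLinearMap, ?_⟩
    · rw [← F.exact0]
      rintro _ ⟨x, rfl⟩
      exact LinearMap.congr_fun h x
    · ext x
      have : (F.ε.quotKerEquivOfSurjective F.surj).symm (F.ε x) =
            Submodule.Quotient.mk x := by
            rw [LinearEquiv.symm_apply_eq]; rfl
      simp only [LinearMap.comp_apply, LinearEquiv.coe_coe, this]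
      rfl
  · rintro ⟨h, rfl⟩
    ext x
    simp only [LinearMap.comp_apply, F.toPR.exact0.apply_apply_eq_zero x]
    have : F.ε (F.d 0 x) = 0 := F.toPR.exact0.apply_apply_eq_zero x
    simp [this]

/-- kernel is the dual -/
noncomputable def kerEquiv (F : MinRes R M) : Module.Dual R M ≃ₗ[R] LinearMap.ker (lamCover F) :=
  LinearEquiv.ofBijective (F.ε.dualMap.codRestrict _
    (fun h => (mem_ker_lamCover F _).2 ⟨h, rfl⟩)) (by
    constructor
    · intro a b hab
      exact LinearMap.dualMap_injective_of_surjective F.surj (congrArg Subtype.val hab)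
    · rintro ⟨f, hf⟩
      obtain ⟨h, rfl⟩ := (mem_ker_lamCover F _).1 hf
      exact ⟨h, rfl⟩)

theorem kerEquiv_val (F : MinRes R M) (h : Module.Dual R M) :
    (kerEquiv F h : Module.Dual R (F.P 0)) = h ∘ₗ F.ε := rfl

theorem lamCover_superfluous [Module.Finite R M] (hs : IsStableModule R M) (F : MinRes R M) :
    (LinearMap.ker (lamCover F)).IsSuperfluous := by
  have := F.finite 0
  have := F.projective 0
  refine superfluous_of_dual _ fun f hf φ => ?_
  obtain ⟨h, rfl⟩ := (mem_ker_lamCover F _).1 hf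
  obtain ⟨x, rfl⟩ := (Module.bijective_dual_eval R (F.P 0)).2 φ
  exact stable_dual hs h (F.ε x)

/-- resolution of the linked module -/
noncomputable def lamRes [Module.Finite R M] (hs : IsStableModule R M) (F : MinRes R M)
    (H : MinRes R (LinearMap.ker (lamCover F))) : MinRes R F.lambdaMod :=
  have := F.finite 0
  have := F.projective 0
  MinRes.cons (lamCover F) (LinearMap.surjective_rangeRestrict _) (lamCover_superfluous hs F) H

theorem lamRes_equiv [Module.Finite R M] (hs : IsStableModule R M) (F : MinRes R M)
    (H : MinRes R (LinearMap.ker (lamCover F)))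
    (ht : Function.Injective (Module.Dual.eval R M)) :
    Nonempty ((lamRes hs F H).lambdaMod ≃ₗ[R] M) := by
  have := F.finite 0
  have := F.projective 0
  let δ : Module.Dual R (Module.Dual R (F.P 0)) →ₗ[R] Module.Dual R (H.P 0) :=
    ((LinearMap.ker (lamCover F)).subtype ∘ₗ H.ε).dualMap
  let Φ : F.P 0 →ₗ[R] Module.Dual R (H.P 0) := δ ∘ₗ Module.Dual.eval R (F.P 0)
  have hr : LinearMap.range δ = LinearMap.range Φ := by
    rw [LinearMap.range_comp, LinearMap.range_eq_top.2 (Module.bijective_dual_eval R (F.P 0)).2,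
      Submodule.map_top]
  have hk : LinearMap.ker Φ = LinearMap.ker F.ε := by
    ext x
    rw [LinearMap.mem_ker, LinearMap.mem_ker]
    constructor
    · intro hx
      apply ht
      rw [map_zero]
      ext h
      obtain ⟨q, hq⟩ := H.surj (kerEquiv F h)
      have := LinearMap.congr_fun hx q
      change (H.ε q : Module.Dual R (F.P 0)) x = 0 at this
      rw [hq] at this
      exact this
    · intro hx
      ext q
      change (H.ε q : Module.Dual R (F.P 0)) x = 0
      obtain ⟨h, hh⟩ := (mem_ker_lamCover F _).1 (H.ε q).2
      rw [← hh, LinearMap.comp_apply, hx, map_zero]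
  exact ⟨(LinearEquiv.ofEq _ _ hr).trans (Φ.quotKerEquivRange.symm.trans
    ((Submodule.quotEquivOfEq _ _ hk).trans (F.ε.quotKerEquivOfSurjective F.surj)))⟩

theorem part_one [IsNoetherianRing R] [Module.Finite R M] (h0 : EV R 0 (R ⧸ maximalIdeal R) R)
    (hs : IsStableModule R M) (hp : PunctG R M) (F : MinRes R M) :
    IsHorizontallyLinked R M ↔ gammaTorsion R (maximalIdeal R) M = ⊥ := by
  constructor
  · rintro ⟨F, G, ⟨e⟩⟩
    exact gamma_bot (EV_congr_right e (lambda_EV0 h0 G))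
  · intro h
    have := F.finite 0
    have := F.projective 0
    obtain ⟨H⟩ := exists_minRes (R := R) (X := LinearMap.ker (lamCover F))
    exact ⟨F, lamRes hs F H, lamRes_equiv hs F H (torsionless hp (EV_zero_of_gamma h))⟩

end Fsec

section Gsec
open IsLocalRing
variable {R : Type u} [CommRing R]
variable {K X Y Z P A : Type u} [AddCommGroup X] [Module R X] [AddCommGroup Y] [Module R Y]
  [AddCommGroup Z] [Module R Z] [AddCommGroup P] [Module R P] [AddCommGroup K] [Module R K]
  [AddCommGroup A] [Module R A]

theorem exists_notEV [IsNoetherianRing R] [IsLocalRing R] [Module.Finite R X] [Nontrivial X] :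
    ∃ i, ¬ EV R i (R ⧸ maximalIdeal R) X := by
  suffices H : ∀ (I : Ideal R) (X : Type u) [AddCommGroup X] [Module R X] [Module.Finite R X]
      [Nontrivial X], Module.annihilator R X = I → ∃ i, ¬ EV R i (R ⧸ maximalIdeal R) X from
    H _ X rfl
  intro I
  induction I using WellFoundedGT.induction with
  | ind I ih =>
    intro X _ _ _ _ hI
    by_contra! hc
    have h0 := EV_zero.1 (hc 0)
    have : Subsingleton ((R ⧸ maximalIdeal R) →ₗ[R] X) := subsingleton_of_forall_eq 0 h0
    obtain ⟨x, hx, hreg⟩ := IsSMulRegular.subsingleton_linearMap_iff.1 this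
    rw [Ideal.annihilator_quotient] at hx
    have hnt := nontrivial_quotSMulTop_of_mem_maximalIdeal X hx
    have hlt : I < Module.annihilator R (QuotSMulTop x X) := by
      rw [← hI]
      refine lt_of_le_of_ne ?_ ?_
      · exact LinearMap.annihilator_le_of_surjective (Submodule.mkQ _) (Submodule.mkQ_surjective _)
      · intro he
        have := QuotSMulTop.mem_annihilator X x
        rw [← he, Module.mem_annihilator] at this
        obtain ⟨y, hy⟩ := exists_ne (0 : X)
        exact hy (hreg (by simp [this]))
    obtain ⟨i, hi⟩ := ih _ hlt (QuotSMulTop x X) rfl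
    refine hi (cov_right (LinearMap.lsmul R X x) (Submodule.mkQ _) ?_ hreg
      (Submodule.mkQ_surjective _) (hc i) (hc (i+1)))
    intro y
    rw [Submodule.mkQ_apply, Submodule.Quotient.mk_eq_zero, Submodule.mem_smul_pointwise_iff_exists]
    simp

/-- pushforward on Ext -/
noncomputable def pc {n : ℕ} (x : Abelian.Ext.{u} (ModuleCat.of R K) (ModuleCat.of R X) n)
    (f : X →ₗ[R] Y) : Abelian.Ext.{u} (ModuleCat.of R K) (ModuleCat.of R Y) n :=
  x.comp (Abelian.Ext.mk₀ (ModuleCat.ofHom f)) (add_zero n)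

theorem pc_pc {n : ℕ} (x : Abelian.Ext.{u} (ModuleCat.of R K) (ModuleCat.of R X) n)
    (f : X →ₗ[R] Y) (g : Y →ₗ[R] Z) : pc (pc x f) g = pc x (g ∘ₗ f) := by
  simp only [pc]
  rw [ModuleCat.ofHom_comp, ← Abelian.Ext.mk₀_comp_mk₀,
    ← Abelian.Ext.comp_assoc_of_third_deg_zero]

theorem pc_id {n : ℕ} (x : Abelian.Ext.{u} (ModuleCat.of R K) (ModuleCat.of R X) n) :
    pc x LinearMap.id = x := by
  simp [pc]

theorem zero_pc {n : ℕ} (f : X →ₗ[R] Y) :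
    pc (0 : Abelian.Ext.{u} (ModuleCat.of R K) (ModuleCat.of R X) n) f = 0 := by
  simp [pc]

theorem pc_exact {n : ℕ} (f : X →ₗ[R] Y) (g : Y →ₗ[R] Z) (h : Function.Exact f g)
    (hf : Function.Injective f) (hg : Function.Surjective g)
    (x : Abelian.Ext.{u} (ModuleCat.of R K) (ModuleCat.of R Y) n) (hx : pc x g = 0) :
    ∃ y, pc y f = x :=
  Abelian.Ext.covariant_sequence_exact₂ _ (scOf_se f g h hf hg) x hx

theorem pc_inj {n : ℕ} (f : X →ₗ[R] Y) (g : Y →ₗ[R] Z) (h : Function.Exact f g)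
    (hf : Function.Injective f) (hg : Function.Surjective g) (hZ : EV R n K Z)
    (x : Abelian.Ext.{u} (ModuleCat.of R K) (ModuleCat.of R X) (n+1)) (hx : pc x f = 0) :
    x = 0 := by
  obtain ⟨y, hy⟩ := Abelian.Ext.covariant_sequence_exact₁ _ (scOf_se f g h hf hg) x hx rfl
  rw [← hy, EV_iff.1 hZ y]
  simp

theorem PR.dual_exact (F : PR R X) (i : ℕ) (h : EV R (i+1) X R) :
    Function.Exact (F.d i).dualMap (F.d (i+1)).dualMap := by
  intro f
  constructor
  · intro hf
    obtain ⟨g, hg⟩ := (F.EV_succ_iff i).1 h f hf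
    exact ⟨g, hg.symm⟩
  · rintro ⟨g, rfl⟩
    ext x
    simp [(F.exact i).apply_apply_eq_zero x]

/-- embedding of a G-dim zero module -/
noncomputable def iotaG (Q : MinRes R (Module.Dual R A)) : A →ₗ[R] Module.Dual R (Q.P 0) :=
  Q.ε.dualMap ∘ₗ Module.Dual.eval R A

theorem iotaG_apply (Q : MinRes R (Module.Dual R A)) (a : A) (q : Q.P 0) :
    iotaG Q a q = Q.ε q a := rfl

/-- the coresolution -/
abbrev coC (Q : MinRes R X) (i : ℕ) : ModuleCat.{u} R := ModuleCat.of R (Module.Dual R (Q.P i))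
/-- the coresolution -/
abbrev coδ (Q : MinRes R X) (i : ℕ) : coC Q i →ₗ[R] coC Q (i+1) := (Q.d i).dualMap

theorem coC_EV (Q : MinRes R X) {j : ℕ} (h : EV R j K R) (i : ℕ) : EV R j K (coC Q i) := by
  have := Q.finite i
  have := Q.projective i
  exact EV_finproj (P := Module.Dual R (Q.P i)) h

theorem iotaG_exact [IsLocalRing R] (hA : Function.Bijective (Module.Dual.eval R A))
    (Q : MinRes R (Module.Dual R A)) :
    Function.Injective (iotaG Q) ∧ Function.Exact (iotaG Q) (lamCover Q) := by
  constructor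
  · exact (LinearMap.dualMap_injective_of_surjective Q.surj).comp hA.1
  · intro f
    constructor
    · intro hf
      have hf0 : f ∘ₗ Q.d 0 = 0 := congrArg Subtype.val hf
      have : f ∈ LinearMap.ker (lamCover Q) := hf
      obtain ⟨h, rfl⟩ := (mem_ker_lamCover Q f).1 this
      obtain ⟨a, rfl⟩ := hA.2 h
      exact ⟨a, rfl⟩
    · rintro ⟨a, rfl⟩
      have : iotaG Q a ∈ LinearMap.ker (lamCover Q) := (mem_ker_lamCover Q _).2 ⟨Module.Dual.eval R A a, rfl⟩
      exact this

theorem gzero_EV [IsNoetherianRing R] [IsLocalRing R] (hA : IsGDimZero R A) (d : ℕ)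
    (hd : ∀ j < d, EV R j K R) : ∀ j < d, EV R j K A := by
  intro j hj
  have := hA.1
  obtain ⟨Q⟩ := exists_minRes (R := R) (X := Module.Dual R A)
  obtain ⟨h1, h2⟩ := iotaG_exact hA.2.1 Q
  cases j with
  | zero => exact EV_zero_of_inj _ h1 (coC_EV Q (hd 0 hj) 0)
  | succ j =>
    refine cov_left (iotaG Q) (lamCover Q) h2 h1 (LinearMap.surjective_rangeRestrict _) (coC_EV Q (hd _ hj) 0) ?_
    refine depth_T1 (coC Q) (coδ Q) j 0 ?_ ?_
    · intro l hl
      exact Q.toPR.dual_exact _ ((extM_iff_EV _).1 (hA.2.2.2 _ (Nat.succ_pos _)))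
    · intro l j' hj'
      exact coC_EV Q (hd _ (by omega)) l


theorem exists_phi [IsLocalRing R] [Module.Finite R X] (I : Submodule R X) (hI : I ≠ ⊤) :
    ∃ φ : X →ₗ[R] (R ⧸ maximalIdeal R), Function.Surjective φ ∧ I ≤ LinearMap.ker φ := by
  obtain ⟨N, hN, hle⟩ := (eq_top_or_exists_le_coatom I).resolve_left hI
  have := isSimpleModule_iff_isCoatom.2 hN
  obtain ⟨J, hJ, ⟨e⟩⟩ := isSimpleModule_iff_quot_maximal.1 this
  have := IsLocalRing.eq_maximalIdeal hJ
  subst this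
  refine ⟨e.toLinearMap ∘ₗ N.mkQ, e.surjective.comp N.mkQ_surjective, ?_⟩
  intro x hx
  have : N.mkQ x = 0 := by rw [Submodule.mkQ_apply, Submodule.Quotient.mk_eq_zero]; exact hle hx
  rw [LinearMap.mem_ker, LinearMap.comp_apply, this, map_zero]

theorem key_lemma [IsNoetherianRing R] [IsLocalRing R] [Module.Finite R P] [Module.Projective R P]
    (hA : IsGDimZero R A) (c : ℕ)
    (hd : ∀ j < c + 1, EV R j (R ⧸ maximalIdeal R) R)
    (hd' : ¬ EV R (c+1) (R ⧸ maximalIdeal R) R) (f : A →ₗ[R] P)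
    (hf : ¬ Function.Surjective f.dualMap) :
    ∃ x : Abelian.Ext.{u} (ModuleCat.of R (R ⧸ maximalIdeal R)) (ModuleCat.of R A) (c+1),
      x ≠ 0 ∧ pc x f = 0 := by
  have := hA.1
  obtain ⟨Q⟩ := exists_minRes (R := R) (X := Module.Dual R A)
  obtain ⟨h1, h2⟩ := iotaG_exact hA.2.1 Q
  have := Q.finite
  have := Q.projective
  rw [EV_iff] at hd'
  push Not at hd'
  obtain ⟨ξ, hξ⟩ := hd'
  obtain ⟨φ, hφ, hφI⟩ := exists_phi (LinearMap.range f.dualMap)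
    (by rwa [ne_eq, LinearMap.range_eq_top])
  obtain ⟨r, hr⟩ := Module.projective_lifting_property (maximalIdeal R).mkQ (φ ∘ₗ Q.ε)
    (Submodule.mkQ_surjective _)
  have hmem : ∀ q : Q.P 0, φ (Q.ε q) = 0 → r q ∈ maximalIdeal R := by
    intro q hq
    have := LinearMap.congr_fun hr q
    rw [LinearMap.comp_apply, LinearMap.comp_apply, hq] at this
    rwa [Submodule.mkQ_apply, Submodule.Quotient.mk_eq_zero] at this
  let a : R →ₗ[R] Module.Dual R (Q.P 0) := LinearMap.toSpanSingleton R _ r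
  have ha : ∀ t, a t = t • r := fun t => rfl
  obtain ⟨q, hq⟩ : ∃ q, r q = 1 := by
    obtain ⟨y, hy⟩ := hφ (Submodule.Quotient.mk 1)
    obtain ⟨q, rfl⟩ := Q.surj y
    have := LinearMap.congr_fun hr q
    rw [LinearMap.comp_apply, LinearMap.comp_apply, hy, Submodule.mkQ_apply,
      Submodule.Quotient.eq] at this
    have hu : IsUnit (r q) := by
      by_contra hnu
      have h3 : r q ∈ maximalIdeal R := hnu
      have := Submodule.sub_mem _ h3 this
      simp at this
    obtain ⟨v, hv⟩ := hu
    exact ⟨((v⁻¹ : Rˣ) : R) • q, by simp [← hv]⟩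
  have hx'0 : pc ξ a ≠ 0 := by
    intro h
    apply hξ
    have h3 : Module.Dual.eval R (Q.P 0) q ∘ₗ a = LinearMap.id := by
      ext; simp [ha, hq]
    rw [← pc_id ξ, ← h3, ← pc_pc, h, zero_pc]
  have hz : ∀ (W : Type u) [AddCommGroup W] [Module R W] [Module.Finite R W]
      [Module.Projective R W] (g : Module.Dual R (Q.P 0) →ₗ[R] W),
      (∀ ψ : W →ₗ[R] R, ψ (g r) ∈ maximalIdeal R) → pc (pc ξ a) g = 0 := by
    intro W _ _ _ _ g hg
    apply ext_eq_zero_of_dual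
    intro ψ
    change pc (pc (pc ξ a) g) ψ = 0
    rw [pc_pc, pc_pc]
    exact ext_smul_zero ξ _ (hg ψ) _ (by simp [ha])
  have hb : pc (pc ξ a) (coδ Q 0) = 0 := by
    apply hz
    intro ψ
    obtain ⟨z, rfl⟩ := (Module.bijective_dual_eval R (Q.P 1)).2 ψ
    refine hmem (Q.d 0 z) ?_
    have : Q.ε (Q.d 0 z) = 0 := Q.toPR.exact0.apply_apply_eq_zero z
    rw [this, map_zero]
  have hc : pc (pc ξ a) (lamCover Q) = 0 := by
    have hex : ∀ i, Function.Exact (coδ Q i) (coδ Q (i+1)) := fun i =>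
      Q.toPR.dual_exact _ ((extM_iff_EV _).1 (hA.2.2.2 _ (Nat.succ_pos _)))
    refine pc_inj (X := LinearMap.range (coδ Q 0)) _ _ (range_exact (coC Q) (coδ Q) 0 (hex 0)) Subtype.val_injective
      (LinearMap.surjective_rangeRestrict _) ?_ _ ?_
    · refine depth_T1 (coC Q) (coδ Q) c 1 (fun l _ => hex _) ?_
      intro l j' hj'
      exact coC_EV Q (hd _ (by omega)) l
    · exact (pc_pc (pc ξ a) (lamCover Q) (LinearMap.range (coδ Q 0)).subtype).trans hb
  obtain ⟨x, hx⟩ := pc_exact (iotaG Q) (lamCover Q) h2 h1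
    (LinearMap.surjective_rangeRestrict _) _ hc
  refine ⟨x, ?_, ?_⟩
  · rintro rfl
    rw [zero_pc] at hx
    exact hx'0 hx.symm
  · obtain ⟨g, hg⟩ := Module.projective_lifting_property Q.ε f.dualMap Q.surj
    let eP : P ≃ₗ[R] Module.Dual R (Module.Dual R P) :=
      LinearEquiv.ofBijective _ (Module.bijective_dual_eval R P)
    let f' : Module.Dual R (Q.P 0) →ₗ[R] P := eP.symm.toLinearMap ∘ₗ g.dualMap
    have he : ∀ (w : Module.Dual R (Q.P 0)) (ψ : P →ₗ[R] R), ψ (f' w) = w (g ψ) := by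
      intro w ψ
      have : eP (f' w) = g.dualMap w := by simp [f']
      exact LinearMap.congr_fun this ψ
    have hff : f' ∘ₗ iotaG Q = f := by
      ext y
      apply eP.injective
      apply LinearMap.ext
      intro ψ
      change ψ (f' (iotaG Q y)) = ψ (f y)
      rw [he, iotaG_apply, ← LinearMap.comp_apply Q.ε, hg]
      rfl
    rw [← hff, ← pc_pc, hx]
    apply hz
    intro ψ
    rw [he]
    apply hmem
    rw [← LinearMap.comp_apply Q.ε, hg]
    exact hφI ⟨ψ, rfl⟩

end Gsec

section Hsec
open IsLocalRing
variable {R : Type u} [CommRing R]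
variable {K X Y Z P A : Type u} [AddCommGroup X] [Module R X] [AddCommGroup Y] [Module R Y]
  [AddCommGroup Z] [Module R Z] [AddCommGroup P] [Module R P] [AddCommGroup K] [Module R K]
  [AddCommGroup A] [Module R A]

theorem IsGDimZero.ev1 (h : IsGDimZero R X) (i : ℕ) : EV R (i+1) X R :=
  (extM_iff_EV _).1 (h.2.2.1 _ (Nat.succ_pos _))

theorem IsGDimZero.ev2 (h : IsGDimZero R X) (i : ℕ) : EV R (i+1) (Module.Dual R X) R :=
  (extM_iff_EV _).1 (h.2.2.2 _ (Nat.succ_pos _))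

theorem gzero_quot (f : X →ₗ[R] Y) (g : Y →ₗ[R] Z) (h : Function.Exact f g)
    (hf : Function.Injective f) (hg : Function.Surjective g)
    (hX : IsGDimZero R X) (hY : IsGDimZero R Y) (h1 : EV R 1 Z R) : IsGDimZero R Z := by
  have hfs : Function.Surjective f.dualMap := by
    intro φ
    obtain ⟨ψ, hψ⟩ := ext_of_EV_one f g h hf hg h1 φ
    exact ⟨ψ, hψ⟩
  have hgi : Function.Injective g.dualMap := LinearMap.dualMap_injective_of_surjective hg
  have hex : Function.Exact g.dualMap f.dualMap := by
    intro φ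
    constructor
    · intro hφ
      have hle : LinearMap.ker g ≤ LinearMap.ker φ := by
        intro y hy
        obtain ⟨x, rfl⟩ := (h y).1 hy
        exact LinearMap.congr_fun hφ x
      refine ⟨((LinearMap.ker g).liftQ φ hle) ∘ₗ
          (g.quotKerEquivOfSurjective hg).symm.toLinearMap, ?_⟩
      ext x
      have : (g.quotKerEquivOfSurjective hg).symm (g x) =
            Submodule.Quotient.mk x := by
            rw [LinearEquiv.symm_apply_eq]; rfl
      simp only [LinearMap.dualMap_apply, LinearMap.comp_apply, LinearEquiv.coe_coe, this]
      rfl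
    · rintro ⟨ψ, rfl⟩
      ext x
      simp [h.apply_apply_eq_zero]
  have := hY.1
  refine ⟨Module.Finite.of_surjective g hg, ⟨?_, ?_⟩, ?_, ?_⟩
  · rw [injective_iff_map_eq_zero]
    intro z hz
    obtain ⟨y, rfl⟩ := hg z
    have hle : LinearMap.ker f.dualMap ≤ LinearMap.ker (Module.Dual.eval R Y y) := by
      intro φ hφ
      obtain ⟨ψ, rfl⟩ := (hex φ).1 hφ
      exact LinearMap.congr_fun hz ψ
    obtain ⟨w, hw⟩ := hX.2.1.2 (((LinearMap.ker f.dualMap).liftQ (Module.Dual.eval R Y y) hle) ∘ₗ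
          (f.dualMap.quotKerEquivOfSurjective hfs).symm.toLinearMap)
    have : y = f w := by
      apply hY.2.1.1
      ext φ
      have h3 := LinearMap.congr_fun hw (f.dualMap φ)
      have : (f.dualMap.quotKerEquivOfSurjective hfs).symm (f.dualMap φ) =
            Submodule.Quotient.mk φ := by
            rw [LinearEquiv.symm_apply_eq]; rfl
      simp only [LinearMap.comp_apply, LinearEquiv.coe_coe, this] at h3
      exact h3.symm
    rw [this, h.apply_apply_eq_zero]
  · intro φ
    obtain ⟨ψ, hψ⟩ := ext_of_EV_one g.dualMap f.dualMap hex hgi hfs (hX.ev2 0) φ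
    obtain ⟨y, rfl⟩ := hY.2.1.2 ψ
    exact ⟨g y, hψ⟩
  · intro i hi
    rw [extM_iff_EV]
    obtain ⟨i, rfl⟩ := Nat.exists_eq_succ_of_ne_zero hi.ne'
    cases i with
    | zero => exact h1
    | succ i => exact con_right f g h hf hg (hY.ev1 _) (hX.ev1 _)
  · intro i hi
    rw [extM_iff_EV]
    obtain ⟨i, rfl⟩ := Nat.exists_eq_succ_of_ne_zero hi.ne'
    exact con_left g.dualMap f.dualMap hex hgi hfs (hY.ev2 _) (hX.ev2 _)

theorem exists_minRes_dual [IsNoetherianRing R] [IsLocalRing R] (hX : Module.Finite R X) :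
    Nonempty (MinRes R (Module.Dual R X)) := exists_minRes

theorem AB [IsNoetherianRing R] [IsLocalRing R] (c : ℕ)
    (hd : ∀ j < c + 1, EV R j (R ⧸ maximalIdeal R) R)
    (hd' : ¬ EV R (c+1) (R ⧸ maximalIdeal R) R) (n : ℕ) (M : ModuleCat.{u} R)
    (hM : GDimLE R n M) : IsGDimZero R M ∨ ∃ e t : ℕ, 0 < t ∧ e + t ≤ c + 1 ∧ ¬ EV R t M R ∧
      ¬ EV R e (R ⧸ maximalIdeal R) M := by
  induction n generalizing M with
  | zero => exact Or.inl hM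
  | succ n ih =>
    obtain ⟨G, f, hG, hf, hK⟩ := hM
    have hex : Function.Exact (LinearMap.ker f).subtype f := LinearMap.exact_subtype_ker_map _
    have hinj : Function.Injective (LinearMap.ker f).subtype := Subtype.val_injective
    rcases ih _ hK with hK | ⟨e, t, ht, het, htK, heK⟩
    · by_cases h1 : EV R 1 M R
      · exact Or.inl (gzero_quot _ f hex hinj hf hK hG h1)
      · right
        refine ⟨c, 1, one_pos, le_rfl, h1, fun hc => ?_⟩
        have := hG.1
        obtain ⟨Q⟩ := exists_minRes_dual (R := R) (X := G) hG.1
        obtain ⟨h3, h4⟩ := iotaG_exact hG.2.1 Q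
        have := Q.finite 0
        have := Q.projective 0
        obtain ⟨x, hx, hx0⟩ := key_lemma (A := LinearMap.ker f) hK c hd hd'
          (iotaG Q ∘ₗ (LinearMap.ker f).subtype) (by
          intro hs
          apply h1
          refine EV_one_of_ext _ f hex hinj hf (hG.ev1 0) fun φ => ?_
          obtain ⟨ψ, hψ⟩ := hs φ
          exact ⟨ψ ∘ₗ iotaG Q, hψ⟩)
        rw [← pc_pc] at hx0
        have h5 := pc_inj (iotaG Q) (lamCover Q) h4 h3 (LinearMap.surjective_rangeRestrict _)
          (depth_T1 (coC Q) (coδ Q) c 0 (fun l _ => Q.toPR.dual_exact _ (hG.ev2 _))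
          (fun l j' hj' => coC_EV Q (hd _ (by omega)) l)) _ hx0
        exact hx (pc_inj _ f hex hinj hf hc x h5)
    · right
      have hGd := gzero_EV hG (c+1) hd
      cases e with
      | zero =>
        exact absurd (EV_zero_of_inj (LinearMap.ker f).subtype hinj (hGd 0 (by omega))) heK
      | succ e =>
        refine ⟨e, t+1, by omega, by omega, fun h => htK ?_, fun h => heK ?_⟩
        · obtain ⟨t, rfl⟩ := Nat.exists_eq_succ_of_ne_zero ht.ne'
          exact con_left _ f hex hinj hf (hG.ev1 _) h
        · exact cov_left _ f hex hinj hf (hGd _ (by omega)) h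

end Hsec

section Isec
open IsLocalRing
variable {R : Type u} [CommRing R] [IsNoetherianRing R] [IsLocalRing R]
variable {X M : Type u} [AddCommGroup X] [Module R X] [AddCommGroup M] [Module R M]

theorem genT (Q : MinRes R X) (c : ℕ) (hd : ∀ j < c + 1, EV R j (R ⧸ maximalIdeal R) R)
    (i : ℕ) (hi : i < c + 1) (h1 : ∀ l < i, EV R (l+1) X R) (h2 : ¬ EV R (i+1) X R)
    (hloc : ∀ (p : Ideal R), p.IsPrime → p ≠ maximalIdeal R → ∀ f : Q.P (i+1) →ₗ[R] R,
      f ∘ₗ Q.d (i+1) = 0 → ∃ s : R, s ∉ p ∧ ∃ g : Q.P i →ₗ[R] R, s • f = g ∘ₗ Q.d i) :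
    (∀ j < i + 1, EV R j (R ⧸ maximalIdeal R) Q.lambdaMod) ∧
      ¬ EV R (i+1) (R ⧸ maximalIdeal R) Q.lambdaMod := by
  have hex : ∀ l < i, Function.Exact (coδ Q (0 + l)) (coδ Q (0 + l + 1)) := by
    intro l hl
    rw [Nat.zero_add]
    exact Q.toPR.dual_exact l (h1 l hl)
  constructor
  · intro j hj
    exact depth_T1 (coC Q) (coδ Q) j 0 (fun l hl => hex l (by omega))
      (fun l j' hj' => coC_EV Q (hd _ (by omega)) l)
  · refine depth_T2 (coC Q) (coδ Q) i i 0 (by omega) hex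
      (fun l j' hj' => coC_EV Q (hd _ (by omega)) l) ?_
    intro hs
    rw [Q.toPR.EV_succ_iff i] at h2
    push Not at h2
    obtain ⟨f, hf, hfn⟩ := h2
    let x : coC Q (i+1) ⧸ LinearMap.range (coδ Q i) := Submodule.Quotient.mk f
    obtain ⟨y, hy, hy2⟩ := socle_of_loc x (by
        intro hx
        obtain ⟨g, hg⟩ := (Submodule.Quotient.mk_eq_zero (LinearMap.range (coδ Q i))).1 hx
        exact hfn g hg.symm) (by
        intro p hp hpm
        obtain ⟨s, hs, g, hg⟩ := hloc p hp hpm f hf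
        refine ⟨s, hs, ?_⟩
        exact (Submodule.Quotient.mk_eq_zero (LinearMap.range (coδ Q i))).2 ⟨g, hg.symm⟩)
    exact hy (EV_zero_k_iff.1 hs y hy2)

theorem hlocM (hp : PunctG R M) (F : MinRes R M) (i : ℕ) (p : Ideal R) (hpp : p.IsPrime)
    (hpm : p ≠ maximalIdeal R) (f : F.P (i+1) →ₗ[R] R) (hf : f ∘ₗ F.d (i+1) = 0) :
    ∃ s : R, s ∉ p ∧ ∃ g : F.P i →ₗ[R] R, s • f = g ∘ₗ F.d i := by
  obtain ⟨s, g, hg⟩ := loc_cobound p.primeCompl F.toPR F.finite i ((hp p hpp hpm).ev1 i) f hf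
  exact ⟨s, s.2, g, hg⟩

theorem loc_ker_EV {A : Type u} [AddCommGroup A] [Module R A] [Module.Finite R M]
    (e0 : Module.Dual R M ≃ₗ[R] A) (S : Submonoid R)
    (h : IsGDimZero (Localization S) (LocalizedModule S M)) (i : ℕ) :
    EV (Localization S) (i+1) (LocalizedModule S A) (Localization S) := by
  have : Module.FinitePresentation R M := Module.finitePresentation_of_finite R _
  let e : LocalizedModule S (Module.Dual R M) ≃ₗ[Localization S] LocalizedModule S A :=
    LinearEquiv.ofBijective (LocalizedModule.map S e0.toLinearMap)
      ⟨LocalizedModule.map_injective S _ e0.injective,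
       LocalizedModule.map_surjective S _ e0.surjective⟩
  have e2 : Module.Dual (Localization S) (LocalizedModule S M) ≃ₗ[Localization S]
      LocalizedModule S A := (locDualEquiv S).symm.trans e
  exact EV_congr_left e2 (h.ev2 i)

theorem hlocN_succ {A : Type u} [AddCommGroup A] [Module R A] [Module.Finite R M]
    (e0 : Module.Dual R M ≃ₗ[R] A) (hp : PunctG R M) (H : MinRes R A) (i : ℕ)
    (p : Ideal R) (hpp : p.IsPrime) (hpm : p ≠ maximalIdeal R) (f : H.P (i+1) →ₗ[R] R)
    (hf : f ∘ₗ H.d (i+1) = 0) :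
    ∃ s : R, s ∉ p ∧ ∃ g : H.P i →ₗ[R] R, s • f = g ∘ₗ H.d i := by
  obtain ⟨s, g, hg⟩ := loc_cobound p.primeCompl H.toPR H.finite i
      (loc_ker_EV e0 _ (hp p hpp hpm) i) f hf
  exact ⟨s, s.2, g, hg⟩

theorem hlocN_aux {A : Type u} [AddCommGroup A] [Module R A] [Module.Finite R M]
    (e0 : Module.Dual R M ≃ₗ[R] A) (hp : PunctG R M) (H : MinRes R A)
    (p : Ideal R) (hpp : p.IsPrime) (hpm : p ≠ maximalIdeal R) (f : H.P 0 →ₗ[R] R)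
    (hf : f ∘ₗ H.d 0 = 0) :
    ∃ s : R, s ∉ p ∧ ∃ y : M, ∀ x : H.P 0, ∀ h, e0 h = H.ε x → s • f x = h y := by
  have : Module.FinitePresentation R M := Module.finitePresentation_of_finite R _
  have hf' : LinearMap.ker H.ε ≤ LinearMap.ker f := by
    intro x hx
    obtain ⟨y, rfl⟩ := (H.toPR.exact0 x).1 hx
    exact LinearMap.congr_fun hf y
  obtain ⟨φ, hφ⟩ : ∃ φ : A →ₗ[R] R, ∀ x : H.P 0, φ (H.ε x) = f x := by
    refine ⟨((LinearMap.ker H.ε).liftQ f hf') ∘ₗ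
        (H.ε.quotKerEquivOfSurjective H.surj).symm.toLinearMap, fun x => ?_⟩
    have : (H.ε.quotKerEquivOfSurjective H.surj).symm (H.ε x) =
          Submodule.Quotient.mk x := by
          rw [LinearEquiv.symm_apply_eq]; rfl
    simp only [LinearMap.comp_apply, LinearEquiv.coe_coe, this]
    rfl
  obtain ⟨s, y, hy⟩ := loc_reflexive p.primeCompl (hp p hpp hpm).2.1.2
    (φ ∘ₗ e0.toLinearMap)
  refine ⟨s, s.2, y, fun x h hh => ?_⟩
  have h1 := LinearMap.congr_fun hy h
  change (s : R) • φ (e0 h) = h y at h1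
  rw [hh, hφ] at h1
  exact h1

theorem hlocN_zero [Module.Finite R M] (hp : PunctG R M) (F : MinRes R M)
    (H : MinRes R (LinearMap.ker (lamCover F)))
    (p : Ideal R) (hpp : p.IsPrime) (hpm : p ≠ maximalIdeal R) (f : H.P 0 →ₗ[R] R)
    (hf : f ∘ₗ H.d 0 = 0) :
    ∃ s : R, s ∉ p ∧ ∃ g : Module.Dual R (F.P 0) →ₗ[R] R,
      s • f = g ∘ₗ ((LinearMap.ker (lamCover F)).subtype ∘ₗ H.ε) := by
  obtain ⟨s, hs, y, hy⟩ := hlocN_aux (kerEquiv F) hp H p hpp hpm f hf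
  obtain ⟨z, rfl⟩ := F.surj y
  refine ⟨s, hs, Module.Dual.eval R (F.P 0) z, ?_⟩
  refine LinearMap.ext fun x => ?_
  obtain ⟨h, hh⟩ := (kerEquiv F).surjective (H.ε x)
  have h1 := hy x h hh
  have h2 : ((H.ε x : LinearMap.ker (lamCover F)) : Module.Dual R (F.P 0)) z = h (F.ε z) := by
    rw [← hh]; rfl
  exact h1.trans h2.symm

theorem hlocN [Module.Finite R M] (hs : IsStableModule R M) (hp : PunctG R M) (F : MinRes R M)
    (H : MinRes R (LinearMap.ker (lamCover F))) (i : ℕ) (p : Ideal R) (hpp : p.IsPrime)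
    (hpm : p ≠ maximalIdeal R) (f : (lamRes hs F H).P (i+1) →ₗ[R] R)
    (hf : f ∘ₗ (lamRes hs F H).d (i+1) = 0) :
    ∃ s : R, s ∉ p ∧ ∃ g : (lamRes hs F H).P i →ₗ[R] R, s • f = g ∘ₗ (lamRes hs F H).d i := by
  cases i with
  | zero => exact hlocN_zero hp F H p hpp hpm f hf
  | succ i => exact hlocN_succ (kerEquiv F) hp H i p hpp hpm f hf

theorem sInf_aux (p : ℕ → Prop) (n : ℕ) (h : p n) (h' : ∀ k < n, ¬ p k) :
    sInf {a : ℕ∞ | ∃ k : ℕ, a = k ∧ p k} = n := by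
  apply le_antisymm
  · exact sInf_le ⟨n, rfl, h⟩
  · apply le_sInf
    rintro a ⟨k, rfl, hk⟩
    by_contra hlt
    exact h' k (by exact_mod_cast not_le.1 hlt) hk

theorem rgr_eq (i : ℕ) (h1 : ∀ l < i, EV R (l+1) X R) (h2 : ¬ EV R (i+1) X R) :
    rgr R X = (i + 1 : ℕ) := by
  refine sInf_aux _ _ ⟨Nat.succ_pos _, fun h => h2 ((extM_iff_EV _).1 h)⟩ ?_
  rintro k hk ⟨hk0, hk1⟩
  obtain ⟨l, rfl⟩ := Nat.exists_eq_succ_of_ne_zero hk0.ne'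
  exact hk1 ((extM_iff_EV _).2 (h1 l (by omega)))

theorem edepth_eq (I : Ideal R) (i : ℕ) (h1 : ∀ j < i, EV R j (R ⧸ I) X)
    (h2 : ¬ EV R i (R ⧸ I) X) : edepth R I X = i := by
  refine sInf_aux _ _ (fun h => h2 ((extM_iff_EV _).1 h)) ?_
  intro k hk hk1
  exact hk1 ((extM_iff_EV _).2 (h1 k hk))

theorem least (p : ℕ → Prop) (n : ℕ) (h : ¬ p n) : ∃ i ≤ n, (∀ l < i, p l) ∧ ¬ p i := by
  classical
  have hex : ∃ n, ¬ p n := ⟨n, h⟩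
  exact ⟨Nat.find hex, Nat.find_min' hex h, fun l hl => not_not.1 (Nat.find_min hex hl),
    Nat.find_spec hex⟩

theorem main16 (hdepth : 0 < rdepth R) [Module.Finite R M]
    (hs : IsStableModule R M) (hp : PunctG R M) (F : MinRes R M) :
    (IsHorizontallyLinked R M ↔ gammaTorsion R (IsLocalRing.maximalIdeal R) M = ⊥) ∧
    (IsHorizontallyLinked R M → 0 < GDim R M → GDim R M < ⊤ →
      rgr R M = edepth R (IsLocalRing.maximalIdeal R) F.lambdaMod ∧
      rgr R F.lambdaMod = edepth R (IsLocalRing.maximalIdeal R) M) := by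
  have h0 : EV R 0 (R ⧸ maximalIdeal R) R := by
    by_contra h
    have : rdepth R = (0 : ℕ) := edepth_eq _ 0 (by simp) h
    simp [this] at hdepth
  refine ⟨part_one h0 hs hp F, fun hl hpos hfin => ?_⟩
  have hg := (part_one h0 hs hp F).1 hl
  have ht := torsionless hp (EV_zero_of_gamma hg)
  have := F.finite 0
  have := F.projective 0
  obtain ⟨H⟩ := exists_minRes (R := R) (X := LinearMap.ker (lamCover F))
  obtain ⟨e⟩ := lamRes_equiv hs F H ht
  obtain ⟨c, hd, hd'⟩ : ∃ c, (∀ j < c + 1, EV R j (R ⧸ maximalIdeal R) R) ∧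
      ¬ EV R (c+1) (R ⧸ maximalIdeal R) R := by
    obtain ⟨n, hn⟩ := exists_notEV (R := R) (X := R)
    obtain ⟨i, -, h1, h2⟩ := least (fun n => EV R n (R ⧸ maximalIdeal R) R) n hn
    cases i with
    | zero => exact absurd h0 h2
    | succ c => exact ⟨c, h1, h2⟩
  have hne : ¬ IsGDimZero R M := by
    intro h
    have : GDim R M ≤ (0 : ℕ) := sInf_le ⟨0, rfl, h⟩
    exact absurd this (not_le.2 (by simpa using hpos))
  obtain ⟨n, hn⟩ : ∃ n, GDimLE R n (ModuleCat.of R M) := by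
    by_contra hc
    push Not at hc
    apply hfin.ne
    unfold GDim
    rw [sInf_eq_top]
    rintro a ⟨k, -, hk⟩
    exact absurd hk (hc k)
  rcases AB c hd hd' n _ hn with h | ⟨a, t, ht0, hat, htM, haM⟩
  · exact absurd h hne
  obtain ⟨t, rfl⟩ := Nat.exists_eq_succ_of_ne_zero ht0.ne'
  constructor
  · obtain ⟨i, hi, h1, h2⟩ := least (fun l => EV R (l+1) M R) t htM
    obtain ⟨h3, h4⟩ := genT F c hd i (by omega) h1 h2 (hlocM hp F i)
    rw [rgr_eq i h1 h2, edepth_eq _ _ h3 h4]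
  · obtain ⟨l, hla, hl⟩ : ∃ l, l < a ∧ ¬ EV R (l+1) F.lambdaMod R := by
      by_contra hc
      push Not at hc
      apply haM
      refine EV_congr_right e (depth_T1 (coC (lamRes hs F H)) (coδ (lamRes hs F H)) a 0
        (fun l hl => ?_) (fun l j' hj' => coC_EV (lamRes hs F H) (hd _ (by omega)) l))
      rw [Nat.zero_add]
      exact (lamRes hs F H).toPR.dual_exact l (hc l hl)
    obtain ⟨i, hi, h1, h2⟩ := least (fun l => EV R (l+1) F.lambdaMod R) l hl
    obtain ⟨h3, h4⟩ := genT (lamRes hs F H) c hd i (by omega) h1 h2 (hlocN hs hp F H i)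
    rw [rgr_eq i h1 h2, edepth_eq _ _ (fun j hj => EV_congr_right e (h3 j hj))
      (fun h => h4 (EV_congr_right e.symm h))]

end Isec

end Helpers

section Statements

variable (R : Type u) [CommRing R] [IsNoetherianRing R]

theorem stmt16 [IsLocalRing R] (hdepth : 0 < rdepth R)
    (M : Type u) [AddCommGroup M] [Module R M] [Module.Finite R M]
    (hstable : IsStableModule R M)
    (hpunct : ∀ (p : Ideal R) (h : p.IsPrime), haveI := h;
      p ≠ IsLocalRing.maximalIdeal R → locGDim R p M = 0)
    (F : MinRes R M) :
    (IsHorizontallyLinked R M ↔ gammaTorsion R (IsLocalRing.maximalIdeal R) M = ⊥) ∧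
    (IsHorizontallyLinked R M → 0 < GDim R M → GDim R M < ⊤ →
      rgr R M = edepth R (IsLocalRing.maximalIdeal R) F.lambdaMod ∧
      rgr R F.lambdaMod = edepth R (IsLocalRing.maximalIdeal R) M) := by
  exact main16 hdepth hstable (fun p h hpm => gdim_zero_iff _ _ (hpunct p h hpm)) F

end Statements
end

section
/- Let (R,m) be a local ring with depth R ≥ 2 and let M be an R-module. Let n be an integer with 1 < n ≤ depth R such that Ext^i_R(M,R) has finite length for all i with 1 ≤ i < n. Then Ext^i_R(M,R) ≅ H^i_m(λM) for all i with 1 ≤ i < n. -/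
open CategoryTheory

open CategoryTheory

namespace S17
section Comparison
open CategoryTheory Limits Abelian
universe w
variable {R : Type w} [CommRing R] {X X' : ModuleCat.{w} R} (P : ProjectiveResolution X)
  (P' : ProjectiveResolution X')
  (Y : ModuleCat.{w} R) (n : ℕ)

noncomputable abbrev KK : CochainComplex (ModuleCat.{w} R) ℕ := P.complex.linearYonedaObj R Y

/-- elements of the complex as morphisms -/
def toH : (KK P Y).X n ≃ₗ[R] (P.complex.X n ⟶ Y) := LinearEquiv.refl R (P.complex.X n ⟶ Y)

lemma toH_d (m : ℕ) (f : (KK P Y).X n) :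
    toH P Y m ((KK P Y).d n m f) = P.complex.d m n ≫ toH P Y n f := rfl

lemma cyc (z : (KK P Y).cycles n) :
    P.complex.d (n+1) n ≫ toH P Y n ((KK P Y).iCycles n z) = 0 := by
  have h := (KK P Y).iCycles_d n (n+1)
  exact congr($h z)

lemma extMk_smul (r : R) (f : P.complex.X n ⟶ Y) (hf : P.complex.d (n+1) n ≫ f = 0) :
    P.extMk (r • f) (n+1) rfl (by simp [hf]) = r • P.extMk f (n+1) rfl hf := by
  rw [Ext.smul_eq_comp_mk₀, P.extMk_comp_mk₀]
  simp

lemma extMk_zero_deg (f : P.complex.X 0 ⟶ Y) (hf : P.complex.d 1 0 ≫ f = 0)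
    (h : P.extMk f 1 rfl hf = 0) : f = 0 := by
  rw [← P.extEquivCohomologyClass.apply_eq_iff_eq, P.extEquivCohomologyClass_extMk,
    P.extEquivCohomologyClass_zero,
    CochainComplex.HomComplex.CohomologyClass.mk_eq_zero_iff,
    CochainComplex.HomComplex.Cocycle.toSingleMk_mem_coboundaries_iff _ _ _ _ _ 1 (by simp)] at h
  obtain ⟨g, hg⟩ := h
  have hz : IsZero (P.cochainComplex.X 1) := P.cochainComplex.isZero_of_isStrictlyLE 0 1
  rw [hz.eq_of_src g 0, comp_zero] at hg
  rw [← cancel_epi (P.cochainComplexXIso (-(0:ℕ)) 0 rfl).hom, ← hg, comp_zero]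

noncomputable def kerToExt :
    ((KK P Y).cycles n) →ₗ[R] (Ext X Y n) where
  toFun z := P.extMk (toH P Y n ((KK P Y).iCycles n z)) (n+1) rfl (cyc P Y n z)
  map_add' a b := by
    rw [P.add_extMk]
    congr 1
    simp
  map_smul' r a := by
    simp only [RingHom.id_apply]
    rw [← extMk_smul]
    congr 1
    simp

lemma kerToExt_apply (z : (KK P Y).cycles n) :
    kerToExt P Y n z = P.extMk (toH P Y n ((KK P Y).iCycles n z)) (n+1) rfl (cyc P Y n z) := rfl

lemma extMk_of_eq_zero (f : P.complex.X n ⟶ Y) (hf : P.complex.d (n+1) n ≫ f = 0) (h : f = 0) :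
    P.extMk f (n+1) rfl hf = 0 := by
  have h1 := extMk_smul P Y n (0 : R) f hf
  refine Eq.trans ?_ (h1.trans (zero_smul _ _))
  congr 1
  rw [h, smul_zero]

lemma kerToExt_toCycles (p : ℕ) (hp : (ComplexShape.up ℕ).prev n = p) :
    (KK P Y).toCycles p n ≫ ModuleCat.ofHom (kerToExt P Y n) = 0 := by
  ext f
  change kerToExt P Y n ((KK P Y).toCycles p n f) = 0
  rw [kerToExt_apply]
  have h : (KK P Y).iCycles n ((KK P Y).toCycles p n f) = (KK P Y).d p n f :=
    congr($((KK P Y).toCycles_i p n) f)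
  have h' : toH P Y n ((KK P Y).iCycles n ((KK P Y).toCycles p n f)) =
    P.complex.d n p ≫ toH P Y p f := by rw [h]; rfl
  rcases n with _ | n
  · apply extMk_of_eq_zero
    rw [h', P.complex.shape _ _ (by simp), zero_comp]
  · obtain rfl : n = p := by rw [← hp]; simp
    exact (P.extMk_eq_zero_iff _ _ _ _ n rfl).2 ⟨_, h'.symm⟩

noncomputable def theta : (KK P Y).homology n ⟶ ModuleCat.of R (Ext X Y n) :=
  ((KK P Y).homologyIsCokernel _ n rfl).desc
    (CokernelCofork.ofπ (ModuleCat.ofHom (kerToExt P Y n)) (kerToExt_toCycles P Y n _ rfl))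

lemma pi_theta : (KK P Y).homologyπ n ≫ theta P Y n = ModuleCat.ofHom (kerToExt P Y n) :=
  ((KK P Y).homologyIsCokernel _ n rfl).fac _ WalkingParallelPair.one

lemma iCycles_inj {z z' : (KK P Y).cycles n}
    (h : (KK P Y).iCycles n z = (KK P Y).iCycles n z') : z = z' :=
  (ModuleCat.mono_iff_injective ((KK P Y).iCycles n)).1 inferInstance h

instance theta_isIso : IsIso (theta P Y n) := by
  rw [ConcreteCategory.isIso_iff_bijective]
  have hs : Function.Surjective ((KK P Y).homologyπ n) :=
    (ModuleCat.epi_iff_surjective _).1 inferInstance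
  have hpt : ∀ z, theta P Y n ((KK P Y).homologyπ n z) = kerToExt P Y n z := fun z =>
    congr($(pi_theta P Y n) z)
  constructor
  · refine (injective_iff_map_eq_zero (theta P Y n).hom).2 fun x hx => ?_
    obtain ⟨z, rfl⟩ := hs x
    have hx : theta P Y n ((KK P Y).homologyπ n z) = 0 := hx
    rw [hpt, kerToExt_apply] at hx
    rcases n with _ | n
    · have := extMk_zero_deg P Y _ _ hx
      have h0 : z = 0 := iCycles_inj P Y 0 (by simpa using this)
      simp [h0]
    · rw [P.extMk_eq_zero_iff _ _ _ _ n rfl] at hx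
      obtain ⟨g, hg⟩ := hx
      have h1 : (KK P Y).iCycles (n+1) ((KK P Y).toCycles n (n+1) ((toH P Y n).symm g))
         = (KK P Y).d n (n+1) ((toH P Y n).symm g) :=
        congr($((KK P Y).toCycles_i n (n+1)) ((toH P Y n).symm g))
      have h2 : z = (KK P Y).toCycles n (n+1) ((toH P Y n).symm g) := by
        apply iCycles_inj
        rw [h1]
        exact hg.symm
      rw [h2]
      exact congr($((KK P Y).toCycles_comp_homologyπ n (n+1)) ((toH P Y n).symm g))
  · intro e
    obtain ⟨f, hf, rfl⟩ := P.extMk_surjective e (n+1) rfl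
    let k : ModuleCat.of R R ⟶ (KK P Y).X n :=
      ModuleCat.ofHom (LinearMap.toSpanSingleton R _ ((toH P Y n).symm f))
    have hk : k ≫ (KK P Y).d n (n+1) = 0 := by
      ext
      change (KK P Y).d n (n+1) ((1:R) • (toH P Y n).symm f) = 0
      rw [one_smul]
      exact hf
    let z := (KK P Y).liftCycles k (n+1) (by simp) hk (1 : R)
    have hz : (KK P Y).iCycles n z = (toH P Y n).symm f := by
      have := congr($((KK P Y).liftCycles_i k (n+1) (by simp) hk) (1 : R))
      simp only [ModuleCat.hom_comp, LinearMap.comp_apply] at this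
      refine this.trans ?_
      change (1:R) • (toH P Y n).symm f = _
      rw [one_smul]
    refine ⟨(KK P Y).homologyπ n z, ?_⟩
    rw [hpt, kerToExt_apply]
    congr 1

noncomputable def KKmap (φ : P.complex ⟶ P'.complex) : KK P' Y ⟶ KK P Y :=
  (HomologicalComplex.unopFunctor _ _).map
    (((((linearYoneda R (ModuleCat.{w} R)).obj Y).rightOp.mapHomologicalComplex _).map φ).op)

lemma theta_nat (g : X ⟶ X') (φ : ProjectiveResolution.Hom P P' g) :
    HomologicalComplex.homologyMap (KKmap P P' Y φ.hom) n ≫ theta P Y n =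
    theta P' Y n ≫ ModuleCat.ofHom (Ext.precompOfLinear (Ext.mk₀ g) R Y (zero_add n)) := by
  rw [← cancel_epi ((KK P' Y).homologyπ n),
    HomologicalComplex.homologyπ_naturality_assoc, pi_theta, ← Category.assoc, pi_theta]
  ext z
  simp only [ModuleCat.hom_comp, LinearMap.comp_apply, ModuleCat.hom_ofHom, kerToExt_apply]
  simp only [Ext.precompOfLinear, Ext.bilinearCompOfLinear_apply_apply]
  rw [ProjectiveResolution.mk₀_comp_extMk _ _ _ _ φ]
  congr 1
  exact congr($(HomologicalComplex.cyclesMap_i (KKmap P P' Y φ.hom) n) z)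

end Comparison
end S17

open CategoryTheory

namespace S17
section Comparison2
open CategoryTheory Limits Abelian Opposite
universe w
variable {R : Type w} [CommRing R] {X X' : ModuleCat.{w} R} (P : ProjectiveResolution X)
  (P' : ProjectiveResolution X')
  (Y : ModuleCat.{w} R) (n : ℕ)

lemma gen_unop {D : Type*} [Category D] {A B : Dᵒᵖ} {A' B' : D} (a : A ⟶ B) (eA : A ≅ op A')
    (eB : B ≅ op B') (c : B' ⟶ A') (h : a ≫ eB.hom = eA.hom ≫ c.op) :
    a.unop ≫ eA.inv.unop = eB.inv.unop ≫ c := by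
  apply Quiver.Hom.op_inj
  simp only [op_comp, Quiver.Hom.op_unop]
  rw [Iso.inv_comp_eq, ← Category.assoc, ← h, Category.assoc, Iso.hom_inv_id, Category.comp_id]

lemma gen_unop2 {D : Type*} [Category D] {A B L M : Dᵒᵖ} {A' B' : D} (a : A ⟶ B) (eA : A ≅ op A')
    (eB : B ≅ op B') (c : B' ⟶ A') (h : a ≫ eB.hom = eA.hom ≫ c.op) 
    (iA : L ≅ A) (iB : M ≅ B) (l : L ⟶ M) (hl : iA.inv ≫ l = a ≫ iB.inv) :
    l.unop ≫ (iA.unop.symm ≪≫ eA.unop.symm).hom = (iB.unop.symm ≪≫ eB.unop.symm).hom ≫ c := by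
  change l.unop ≫ iA.inv.unop ≫ eA.inv.unop = (iB.inv.unop ≫ eB.inv.unop) ≫ c
  rw [Category.assoc, ← gen_unop a eA eB c h, ← Category.assoc, ← Category.assoc, ← unop_comp, hl,
    unop_comp]

lemma isoExt_nat (g : X ⟶ X') (φ : ProjectiveResolution.Hom P P' g) :
    ((_root_.Ext R (ModuleCat.{w} R) n).map g.op).app Y ≫ (P.isoExt n Y).hom =
    (P'.isoExt n Y).hom ≫ HomologicalComplex.homologyMap (KKmap P P' Y φ.hom) n := by
  have h := ProjectiveResolution.isoLeftDerivedObj_inv_naturality g P P' φ.hom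
    (by simpa using φ.hom_f_zero_comp_π_f_zero) ((linearYoneda R (ModuleCat.{w} R)).obj Y).rightOp n
  exact gen_unop2 _ ((KK P Y).homologyOp n) ((KK P' Y).homologyOp n) _
    (HomologicalComplex.homologyOp_hom_naturality (KKmap P P' Y φ.hom) n) _ _ _ h

/-- restriction along `f` -/
noncomputable def pre {A B : ModuleCat.{w} R} (f : A ⟶ B) : Abelian.Ext B Y n →ₗ[R] Abelian.Ext A Y n :=
  Ext.precompOfLinear (Ext.mk₀ f) R Y (zero_add n)

lemma pre_apply {A B : ModuleCat.{w} R} (f : A ⟶ B) (x : Abelian.Ext B Y n) :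
    pre Y n f x = (Ext.mk₀ f).comp x (zero_add n) := rfl

noncomputable def EFun : (ModuleCat.{w} R)ᵒᵖ ⥤ ModuleCat.{w} R where
  obj X := ModuleCat.of R (Abelian.Ext X.unop Y n)
  map f := ModuleCat.ofHom (pre Y n f.unop)
  map_id X := by
    apply ModuleCat.hom_ext
    refine LinearMap.ext fun x => ?_
    change pre Y n (𝟙 _) x = x
    simp [pre_apply]
  map_comp f g := by
    apply ModuleCat.hom_ext
    refine LinearMap.ext fun x => ?_
    change pre Y n (g.unop ≫ f.unop) x = pre Y n g.unop (pre Y n f.unop x)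
    simp only [pre_apply]
    rw [Ext.mk₀_comp_mk₀_assoc]

noncomputable def resHom (g : X ⟶ X') : ProjectiveResolution.Hom P P' g where
  hom := ProjectiveResolution.lift g P P'
  hom_f_zero_comp_π_f_zero := by
    rw [← HomologicalComplex.comp_f, ProjectiveResolution.lift_commutes, HomologicalComplex.comp_f]

lemma gen_paste {D : Type*} [Category D] {A B C A' B' C' : D} {a : A ⟶ A'} {i : A' ⟶ B'} {i' : A ⟶ B}
    {k : B ⟶ B'} {t : B' ⟶ C'} {t' : B ⟶ C} {p : C ⟶ C'} (h : a ≫ i = i' ≫ k) (h2 : k ≫ t = t' ≫ p) :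
    a ≫ (i ≫ t) = (i' ≫ t') ≫ p := by
  rw [← Category.assoc, h, Category.assoc, h2, Category.assoc]

noncomputable def thetaIso : (KK P Y).homology n ≅ ModuleCat.of R (Abelian.Ext X Y n) :=
  haveI := theta_isIso P Y n
  asIso (theta P Y n)

lemma thetaIso_hom : (thetaIso P Y n).hom = theta P Y n := rfl

noncomputable def extIso :
    (_root_.Ext R (ModuleCat.{w} R) n).flip.obj Y ≅ EFun Y n :=
  NatIso.ofComponents
    (fun X => (projectiveResolution X.unop).isoExt n Y ≪≫
      thetaIso (projectiveResolution X.unop) Y n) <| by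
    intro X X' f
    have h1 := isoExt_nat (projectiveResolution X'.unop) (projectiveResolution X.unop) Y n f.unop
      (resHom _ _ f.unop)
    have h2 := theta_nat (projectiveResolution X'.unop) (projectiveResolution X.unop) Y n f.unop
      (resHom _ _ f.unop)
    exact gen_paste h1 h2

noncomputable def extEquiv (A B : Type w) [AddCommGroup A] [Module R A] [AddCommGroup B] [Module R B] :
    (((_root_.Ext R (ModuleCat.{w} R) n).obj (op (ModuleCat.of R A))).obj (ModuleCat.of R B)) ≃ₗ[R]
      Abelian.Ext (ModuleCat.of R A) (ModuleCat.of R B) n :=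
  ((extIso (ModuleCat.of R B) n).app (op (ModuleCat.of R A))).toLinearEquiv

end Comparison2
end S17

open CategoryTheory

namespace S17
section Colim
open CategoryTheory Limits Abelian Opposite
universe w
variable {R : Type w} [CommRing R]

instance forget_pres : PreservesFilteredColimitsOfSize.{0, 0} (forget (ModuleCat.{w} R)) :=
  preservesSmallestFilteredColimits_of_preservesFilteredColimits.{w, w} _

lemma cocone_equiv {J : Type} [SmallCategory J] [IsFiltered J] (F : J ⥤ ModuleCat.{w} R)
    (c : Cocone F)
    (h1 : ∀ t (x : F.obj t), c.ι.app t x = 0 → ∃ (t' : J) (f : t ⟶ t'), F.map f x = 0)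
    (h2 : ∀ y : c.pt, ∃ t, ∃ x : F.obj t, c.ι.app t x = y) :
    Nonempty ((colimit F : ModuleCat.{w} R) ≃ₗ[R] c.pt) := by
  have hd : ∀ t (x : F.obj t), colimit.desc F c (colimit.ι F t x) = c.ι.app t x := fun t x =>
    congr($(colimit.ι_desc c t) x)
  have hb : Function.Bijective (colimit.desc F c).hom := by
    constructor
    · refine (injective_iff_map_eq_zero (colimit.desc F c).hom).2 fun x hx => ?_
      obtain ⟨t, y, rfl⟩ := Concrete.colimit_exists_rep F x
      obtain ⟨t', f, hf⟩ := h1 t y ((hd t y).symm.trans hx)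
      have := congr($(colimit.w F f) y)
      rw [← this]
      change colimit.ι F t' (F.map f y) = 0
      rw [hf, map_zero]
    · intro y
      obtain ⟨t, x, rfl⟩ := h2 y
      exact ⟨_, hd t x⟩
  exact ⟨LinearEquiv.ofBijective _ hb⟩

lemma colim_equiv {J : Type} [SmallCategory J] [IsFiltered J] (F G : J ⥤ ModuleCat.{w} R)
    (α : F ⟶ G)
    (h1 : ∀ t (x : F.obj t), α.app t x = 0 → ∃ (t' : J) (f : t ⟶ t'), F.map f x = 0)
    (h2 : ∀ t (y : G.obj t), ∃ (t' : J) (f : t ⟶ t') (x : F.obj t'), α.app t' x = G.map f y) :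
    Nonempty ((colimit F : ModuleCat.{w} R) ≃ₗ[R] (colimit G : ModuleCat.{w} R)) := by
  refine cocone_equiv F ((Cocone.precompose α).obj (colimit.cocone G)) ?_ ?_
  · intro t x hx
    have hx : colimit.ι G t (α.app t x) = 0 := hx
    rw [← map_zero (colimit.ι G t).hom] at hx
    obtain ⟨k, f, g, h⟩ := (Concrete.colimit_rep_eq_iff_exists G (α.app t x) (0 : G.obj t)).1 hx
    have h3 : α.app k (F.map f x) = 0 := by
      have := congr($(α.naturality f) x)
      refine this.trans (h.trans ?_)
      exact map_zero (G.map g).hom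
    obtain ⟨t', g', h'⟩ := h1 k _ h3
    exact ⟨t', f ≫ g', by rw [F.map_comp]; exact h'⟩
  · intro y
    obtain ⟨t, y, rfl⟩ := Concrete.colimit_exists_rep G y
    obtain ⟨t', f, x, hx⟩ := h2 t y
    refine ⟨t', x, ?_⟩
    change colimit.ι G t' (α.app t' x) = colimit.ι G t y
    rw [hx]
    exact congr($(colimit.w G f) y)

variable (I : Ideal R)

/-- diagram of derived-category Ext -/
noncomputable def DD (i : ℕ) (N : ModuleCat.{w} R) : ℕᵒᵖᵒᵖ ⥤ ModuleCat.{w} R :=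
  (localCohomology.ringModIdeals (localCohomology.idealPowersDiagram I)).op ⋙ EFun N i

noncomputable def locIso (i : ℕ) (N : ModuleCat.{w} R) :
    (localCohomology I i).obj N ≅ colimit (DD I i N) :=
  colimitObjIsoColimitCompEvaluation
    (localCohomology.diagram (localCohomology.idealPowersDiagram I) i) N ≪≫
    HasColimit.isoOfNatIso (Functor.isoWhiskerLeft
      (localCohomology.ringModIdeals (localCohomology.idealPowersDiagram I)).op (extIso N i))

/-- quotient by powers -/
abbrev Q (t : ℕ) : ModuleCat.{w} R := ModuleCat.of R (R ⧸ I ^ t)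

def qm {t t' : ℕ} (h : t ≤ t') : Q I t' ⟶ Q I t :=
  ModuleCat.ofHom (Submodule.mapQ _ _ LinearMap.id (Ideal.pow_le_pow_right h))

lemma loc_cocone (i : ℕ) (N E : ModuleCat.{w} R)
    (φ : ∀ t, Ext (Q I t) N i →ₗ[R] E)
    (hφ : ∀ t t' (h : t ≤ t') x, φ t' (pre N i (qm I h) x) = φ t x)
    (h1 : ∀ t x, φ t x = 0 → ∃ t', ∃ h : t ≤ t', pre N i (qm I h) x = 0)
    (h2 : ∀ y : E, ∃ t x, φ t x = y) :
    Nonempty ((localCohomology I i).obj N ≃ₗ[R] E) := by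
  obtain ⟨e⟩ := cocone_equiv (DD I i N) (Cocone.mk E
    { app := fun t => ModuleCat.ofHom (φ t.unop.unop)
      naturality := fun t t' f => by
        apply ModuleCat.hom_ext
        refine LinearMap.ext fun x => ?_
        exact hφ _ _ f.unop.unop.down.down x })
    (fun t x hx => by
      obtain ⟨t', h, hh⟩ := h1 t.unop.unop x hx
      exact ⟨op (op t'), (homOfLE h).op.op, hh⟩)
    (fun y => by
      obtain ⟨t, x, hx⟩ := h2 y
      exact ⟨op (op t), x, hx⟩)
  exact ⟨(locIso I i N).toLinearEquiv.trans e⟩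

lemma loc_congr (i j : ℕ) (N E : ModuleCat.{w} R)
    (φ : ∀ t, Ext (Q I t) N i →ₗ[R] Ext (Q I t) E j)
    (hφ : ∀ t t' (h : t ≤ t') x, φ t' (pre N i (qm I h) x) = pre E j (qm I h) (φ t x))
    (h1 : ∀ t x, φ t x = 0 → ∃ t', ∃ h : t ≤ t', pre N i (qm I h) x = 0)
    (h2 : ∀ t y, ∃ t', ∃ h : t ≤ t', ∃ x, φ t' x = pre E j (qm I h) y) :
    Nonempty ((localCohomology I i).obj N ≃ₗ[R] (localCohomology I j).obj E) := by
  obtain ⟨e⟩ := colim_equiv (DD I i N) (DD I j E)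
    { app := fun t => ModuleCat.ofHom (φ t.unop.unop)
      naturality := fun t t' f => by
        apply ModuleCat.hom_ext
        refine LinearMap.ext fun x => ?_
        exact hφ _ _ f.unop.unop.down.down x }
    (fun t x hx => by
      obtain ⟨t', h, hh⟩ := h1 t.unop.unop x hx
      exact ⟨op (op t'), (homOfLE h).op.op, hh⟩)
    (fun t y => by
      obtain ⟨t', h, x, hx⟩ := h2 t.unop.unop y
      exact ⟨op (op t'), (homOfLE h).op.op, x, hx⟩)
  exact ⟨(locIso I i N).toLinearEquiv.trans (e.trans (locIso I j E).toLinearEquiv.symm)⟩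

end Colim
end S17

open CategoryTheory

namespace S17
section Depth
open CategoryTheory Limits Abelian Opposite
universe w
variable {R : Type w} [CommRing R]

/-- vanishing of Ext -/
abbrev EZ (A Y : ModuleCat.{w} R) (j : ℕ) : Prop := ∀ x : Ext A Y j, x = 0

lemma EZ.of_iso {A B Y : ModuleCat.{w} R} {j : ℕ} (e : A ≅ B) (h : EZ A Y j) : EZ B Y j := by
  intro x
  have : (Ext.mk₀ e.inv).comp ((Ext.mk₀ e.hom).comp x (zero_add j)) (zero_add j) = x := by
    rw [Ext.mk₀_comp_mk₀_assoc, e.inv_hom_id, Ext.mk₀_id_comp]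
  rw [← this, h (Ext.comp _ _ _), Ext.comp_zero]

lemma EZ.of_iso_right {A Y Y' : ModuleCat.{w} R} {j : ℕ} (e : Y ≅ Y') (h : EZ A Y j) :
    EZ A Y' j := by
  intro x
  have : (x.comp (Ext.mk₀ e.inv) (add_zero j)).comp (Ext.mk₀ e.hom) (add_zero j) = x := by
    rw [Ext.comp_assoc_of_third_deg_zero, Ext.mk₀_comp_mk₀, e.inv_hom_id, Ext.comp_mk₀_id]
  rw [← this, h (Ext.comp _ _ _), Ext.zero_comp]

lemma EZ.mid {S : ShortComplex (ModuleCat.{w} R)} (hS : S.ShortExact) {Y : ModuleCat.{w} R} {j : ℕ}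
    (h1 : EZ S.X₁ Y j) (h3 : EZ S.X₃ Y j) : EZ S.X₂ Y j := by
  intro x
  obtain ⟨y, rfl⟩ := Ext.contravariant_sequence_exact₂ hS Y x (h1 _)
  rw [h3 y, Ext.comp_zero]

lemma shortExact_sub {M : Type w} [AddCommGroup M] [Module R M] (N : Submodule R M) :
    (ShortComplex.mk (ModuleCat.ofHom N.subtype) (ModuleCat.ofHom N.mkQ)
      (by ext x; simp)).ShortExact where
  exact := by
    rw [ShortComplex.moduleCat_exact_iff]
    intro x hx
    have hx : N.mkQ x = 0 := hx
    rw [Submodule.mkQ_apply, Submodule.Quotient.mk_eq_zero] at hx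
    exact ⟨⟨x, hx⟩, rfl⟩
  mono_f := (ModuleCat.mono_iff_injective _).2 N.injective_subtype
  epi_g := (ModuleCat.epi_iff_surjective _).2 N.mkQ_surjective

lemma fl_vanish [IsLocalRing R] {Y : ModuleCat.{w} R} {j : ℕ}
    (h : EZ (ModuleCat.of R (R ⧸ IsLocalRing.maximalIdeal R)) Y j)
    {A : Type w} [AddCommGroup A] [Module R A] (hA : IsFiniteLength R A) :
    EZ (ModuleCat.of R A) Y j := by
  induction hA with
  | @of_subsingleton M _ _ _ =>
    intro x
    have hz : IsZero (ModuleCat.of R M) := ModuleCat.isZero_of_subsingleton _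
    have : (Ext.mk₀ (𝟙 (ModuleCat.of R M))).comp x (zero_add j) = x := Ext.mk₀_id_comp x
    rw [← this, hz.eq_of_src (𝟙 _) 0, Ext.mk₀_zero, Ext.zero_comp]
  | @of_simple_quotient M _ _ N hs _ ih =>
    refine EZ.mid (shortExact_sub N) ih ?_
    obtain ⟨I, hI, ⟨e⟩⟩ := isSimpleModule_iff_quot_maximal.1 hs
    obtain rfl := IsLocalRing.eq_maximalIdeal hI
    exact h.of_iso e.symm.toModuleIso

lemma fl_quot [IsLocalRing R] [IsNoetherianRing R] (t : ℕ) :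
    IsFiniteLength R (R ⧸ (IsLocalRing.maximalIdeal R) ^ t) := by
  rw [isFiniteLength_iff_isNoetherian_isArtinian]
  refine ⟨inferInstance, ?_⟩
  rcases subsingleton_or_nontrivial (R ⧸ (IsLocalRing.maximalIdeal R) ^ t) with hs | hn
  · infer_instance
  have := IsLocalRing.of_surjective' (Ideal.Quotient.mk ((IsLocalRing.maximalIdeal R) ^ t))
    Ideal.Quotient.mk_surjective
  have : IsArtinianRing (R ⧸ (IsLocalRing.maximalIdeal R) ^ t) := by
    rw [isArtinianRing_iff_isNilpotent_maximalIdeal]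
    refine ⟨t, ?_⟩
    have h1 : IsLocalRing.maximalIdeal (R ⧸ (IsLocalRing.maximalIdeal R) ^ t) ≤
        (IsLocalRing.maximalIdeal R).map (Ideal.Quotient.mk ((IsLocalRing.maximalIdeal R) ^ t)) := by
      rw [← Ideal.map_comap_of_surjective (Ideal.Quotient.mk ((IsLocalRing.maximalIdeal R) ^ t))
        Ideal.Quotient.mk_surjective (IsLocalRing.maximalIdeal _)]
      exact Ideal.map_mono (IsLocalRing.le_maximalIdeal (Ideal.IsPrime.ne_top inferInstance))
    rw [Ideal.zero_eq_bot, eq_bot_iff]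
    refine (Ideal.pow_right_mono h1 t).trans ?_
    rw [← Ideal.map_pow, Ideal.map_quotient_self]
  exact isArtinian_of_surjective_algebraMap (R := R ⧸ (IsLocalRing.maximalIdeal R) ^ t) Ideal.Quotient.mk_surjective

lemma EZ_free {A : ModuleCat.{w} R} {j : ℕ} (h : EZ A (ModuleCat.of R R) j) (k : ℕ) :
    EZ A (ModuleCat.of R (Fin k → R)) j := by
  intro x
  have h1 : (𝟙 (ModuleCat.of R (Fin k → R))) = ∑ i : Fin k,
      (ModuleCat.ofHom (LinearMap.proj i : (Fin k → R) →ₗ[R] R)) ≫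
      (ModuleCat.ofHom (LinearMap.single R (fun _ : Fin k => R) i)) := by
    apply ModuleCat.hom_ext
    rw [ModuleCat.hom_sum]
    refine LinearMap.ext fun v => ?_
    simp only [LinearMap.sum_apply, ModuleCat.hom_comp, ModuleCat.hom_ofHom, LinearMap.comp_apply]
    change v = ∑ i, Pi.single i (v i)
    rw [Finset.univ_sum_single]
  rw [← Ext.comp_mk₀_id x, h1, Ext.mk₀_sum, Ext.comp_sum]
  refine Finset.sum_eq_zero fun i _ => ?_
  rw [← Ext.mk₀_comp_mk₀, ← Ext.comp_assoc_of_third_deg_zero, h (Ext.comp _ _ _), Ext.zero_comp]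

end Depth
end S17

open CategoryTheory

namespace S17
section ProZero
open CategoryTheory Limits Abelian Opposite
universe w
variable {R : Type w} [CommRing R]

/-- the class of the extension given by a surjection -/
noncomputable abbrev ecl {P A : Type w} [AddCommGroup P] [Module R P] [AddCommGroup A] [Module R A]
    (π : P →ₗ[R] A) (hπ : Function.Surjective π) :
    Ext (ModuleCat.of R A) (ModuleCat.of R (LinearMap.ker π)) 1 :=
  (LinearMap.shortExact_shortComplexKer hπ).extClass

lemma ecl_nat {P A P' A' W : Type w} [AddCommGroup P] [Module R P] [AddCommGroup A] [Module R A]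
    [AddCommGroup P'] [Module R P'] [AddCommGroup A'] [Module R A'] [AddCommGroup W] [Module R W]
    (π : P →ₗ[R] A) (hπ : Function.Surjective π)
    (π' : P' →ₗ[R] A') (hπ' : Function.Surjective π')
    (f : P' →ₗ[R] P) (g : A' →ₗ[R] A) (hfg : ∀ p, π (f p) = g (π' p))
    (ι : W →ₗ[R] LinearMap.ker π) (c : LinearMap.ker π' →ₗ[R] W)
    (hc : ∀ z, (ι (c z) : P) = f z) (N : ModuleCat.{w} R) (i : ℕ)
    (y : Ext (ModuleCat.of R (LinearMap.ker π)) N i)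
    (hy : (Ext.mk₀ (ModuleCat.ofHom ι)).comp y (zero_add i) = 0) :
    (Ext.mk₀ (ModuleCat.ofHom g)).comp ((ecl π hπ).comp y (add_comm 1 i)) (zero_add (i+1)) = 0 := by
  let φ : π'.shortComplexKer ⟶ π.shortComplexKer :=
    { τ₁ := ModuleCat.ofHom c ≫ ModuleCat.ofHom ι
      τ₂ := ModuleCat.ofHom f
      τ₃ := ModuleCat.ofHom g
      comm₁₂ := by
        apply ModuleCat.hom_ext
        refine LinearMap.ext fun z => ?_
        exact hc z
      comm₂₃ := by
        apply ModuleCat.hom_ext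
        refine LinearMap.ext fun z => ?_
        exact hfg z }
  have h := ShortComplex.ShortExact.extClass_naturality (LinearMap.shortExact_shortComplexKer hπ')
    (LinearMap.shortExact_shortComplexKer hπ) φ
  have h1 : (Ext.mk₀ (ModuleCat.ofHom g)).comp ((ecl π hπ).comp y (add_comm 1 i)) (zero_add (i+1)) =
    ((Ext.mk₀ (ModuleCat.ofHom g)).comp (ecl π hπ) (zero_add 1)).comp y (add_comm 1 i) := by
    rw [Ext.comp_assoc]
    omega
  rw [h1]
  refine (congrArg (fun z => Ext.comp z y (add_comm 1 i)) h.symm).trans ?_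
  change ((ecl π' hπ').comp (Ext.mk₀ (ModuleCat.ofHom c ≫ ModuleCat.ofHom ι)) (add_zero 1)).comp y _ = 0
  rw [Ext.comp_assoc_of_second_deg_zero, ← Ext.mk₀_comp_mk₀_assoc, hy, Ext.comp_zero, Ext.comp_zero]

lemma exists_ecl {P A : Type w} [AddCommGroup P] [Module R P] [AddCommGroup A] [Module R A]
    [Module.Projective R P]
    (π : P →ₗ[R] A) (hπ : Function.Surjective π) (N : ModuleCat.{w} R) (i : ℕ)
    (x : Ext (ModuleCat.of R A) N (i+1)) : ∃ y, (ecl π hπ).comp y (add_comm 1 i) = x := by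
  have : Projective (ModuleCat.of R P) := (IsProjective.iff_projective _ ).1 inferInstance
  exact Ext.contravariant_sequence_exact₃ (LinearMap.shortExact_shortComplexKer hπ) N x
    (Ext.eq_zero_of_projective (P := ModuleCat.of R P) _) (add_comm 1 i)

lemma mem_smul_top {P : Type w} [AddCommGroup P] [Module R P] (J : Ideal R) (K : Submodule R P)
    (z : K) (hz : (z : P) ∈ J • K) : z ∈ (J • ⊤ : Submodule R K) := by
  have : Submodule.map K.subtype (J • ⊤) = J • K := by
    rw [Submodule.map_smul'', Submodule.map_top, Submodule.range_subtype]
  rw [← this] at hz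
  obtain ⟨z', hz', h⟩ := hz
  exact Subtype.ext h ▸ hz'

lemma ecl_nat' {P A P' A' : Type w} [AddCommGroup P] [Module R P] [AddCommGroup A] [Module R A]
    [AddCommGroup P'] [Module R P'] [AddCommGroup A'] [Module R A']
    (π : P →ₗ[R] A) (hπ : Function.Surjective π)
    (π' : P' →ₗ[R] A') (hπ' : Function.Surjective π')
    (f : P' →ₗ[R] P) (g : A' →ₗ[R] A) (hfg : ∀ p, π (f p) = g (π' p))
    (J : Ideal R) (hJ : ∀ p, π' p = 0 → f p ∈ J • LinearMap.ker π) (N : ModuleCat.{w} R) (i : ℕ)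
    (y : Ext (ModuleCat.of R (LinearMap.ker π)) N i)
    (hy : (Ext.mk₀ (ModuleCat.ofHom (J • ⊤ : Submodule R (LinearMap.ker π)).subtype)).comp y
      (zero_add i) = 0) :
    (Ext.mk₀ (ModuleCat.ofHom g)).comp ((ecl π hπ).comp y (add_comm 1 i)) (zero_add (i+1)) = 0 := by
  let c0 : LinearMap.ker π' →ₗ[R] LinearMap.ker π :=
    (f ∘ₗ (LinearMap.ker π').subtype).codRestrict _ (fun z => by
      have hz : π' z.1 = 0 := z.2
      change π (f z.1) = 0
      rw [hfg, hz, map_zero])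
  let c : LinearMap.ker π' →ₗ[R] (J • ⊤ : Submodule R (LinearMap.ker π)) :=
    c0.codRestrict _ (fun z => mem_smul_top J _ _ (hJ z.1 z.2))
  exact ecl_nat π hπ π' hπ' f g hfg _ c (fun z => rfl) N i y hy

variable (I : Ideal R)

/-- killed by a power -/
def PK (N : Type w) [AddCommGroup N] [Module R N] : Prop := ∃ s, ∀ r ∈ I ^ s, ∀ x : N, r • x = 0

lemma pz [IsNoetherianRing R] (N : ModuleCat.{w} R) (hN : PK I N) (i : ℕ) :
    ∀ (A : Type w) [AddCommGroup A] [Module R A] [Module.Finite R A] (x : Ext (ModuleCat.of R A) N i),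
    ∃ t, (Ext.mk₀ (ModuleCat.ofHom (I ^ t • ⊤ : Submodule R A).subtype)).comp x (zero_add i) = 0 := by
  induction i with
  | zero =>
    intro A _ _ _ x
    obtain ⟨s, hs⟩ := hN
    obtain ⟨f, rfl⟩ := (Ext.mk₀_bijective _ _).2 x
    refine ⟨s, ?_⟩
    rw [Ext.mk₀_comp_mk₀, Ext.mk₀_eq_zero_iff]
    apply ModuleCat.hom_ext
    refine LinearMap.ext fun z => ?_
    obtain ⟨z, hz⟩ := z
    change f.hom z = 0
    induction hz using Submodule.smul_induction_on' with
    | smul r hr n hn => rw [map_smul, hs r hr]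
    | add x hx y hy h1 h2 => rw [map_add, h1, h2, add_zero]
  | succ i ih =>
    intro A _ _ _ x
    obtain ⟨k, π, hπ⟩ := Module.Finite.exists_fin' R A
    obtain ⟨y, rfl⟩ := exists_ecl π hπ N i x
    obtain ⟨u, hu⟩ := ih (LinearMap.ker π) y
    obtain ⟨c, hc⟩ := Ideal.exists_pow_inf_eq_pow_smul I (LinearMap.ker π)
    refine ⟨u + c, ?_⟩
    have hmap : ∀ p ∈ (I ^ (u + c) • ⊤ : Submodule R (Fin k → R)),
        π p ∈ (I ^ (u + c) • ⊤ : Submodule R A) := by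
      intro p hp
      have := Submodule.mem_map_of_mem (f := π) hp
      rw [Submodule.map_smul''] at this
      exact Submodule.smul_mono le_rfl le_top this
    refine ecl_nat' π hπ (π.restrict hmap) ?_ (I ^ (u + c) • ⊤ : Submodule R (Fin k → R)).subtype _
      (fun p => rfl) (I ^ u) ?_ N i y hu
    · rintro ⟨a, ha⟩
      have : Submodule.map π (I ^ (u + c) • ⊤) = I ^ (u + c) • ⊤ := by
        rw [Submodule.map_smul'', Submodule.map_top, LinearMap.range_eq_top.2 hπ]
      rw [← this] at ha
      obtain ⟨p, hp, rfl⟩ := ha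
      exact ⟨⟨p, hp⟩, rfl⟩
    · intro z hz
      have h1 : (z.1 : Fin k → R) ∈ (I ^ (u+c) • ⊤ ⊓ LinearMap.ker π : Submodule R (Fin k → R)) :=
        ⟨z.2, congrArg Subtype.val hz⟩
      rw [hc _ (Nat.le_add_left c u), Nat.add_sub_cancel] at h1
      exact Submodule.smul_mono le_rfl inf_le_right h1

lemma pz_quot [IsNoetherianRing R] (N : ModuleCat.{w} R) (hN : PK I N) (i t : ℕ)
    (x : Ext (Q I t) N (i+1)) : ∃ t', ∃ h : t ≤ t', pre N (i+1) (qm I h) x = 0 := by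
  obtain ⟨y, rfl⟩ := exists_ecl (I ^ t).mkQ (Submodule.mkQ_surjective _) N i x
  obtain ⟨u, hu⟩ := pz I N hN i _ y
  refine ⟨u + t, Nat.le_add_left _ _, ?_⟩
  refine ecl_nat' (I ^ t).mkQ (Submodule.mkQ_surjective _) (I ^ (u + t)).mkQ
    (Submodule.mkQ_surjective _) LinearMap.id _ (fun p => rfl) (I ^ u) ?_ N i y hu
  intro z hz
  rw [Submodule.ker_mkQ, smul_eq_mul, ← pow_add]
  rwa [Submodule.mkQ_apply, Submodule.Quotient.mk_eq_zero] at hz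

end ProZero
end S17

open CategoryTheory

namespace S17
section Shift
open CategoryTheory Limits Abelian Opposite
universe w
variable {R : Type w} [CommRing R] (I : Ideal R)

lemma mkSES {A B C : Type w} [AddCommGroup A] [Module R A] [AddCommGroup B] [Module R B]
    [AddCommGroup C] [Module R C] (f : A →ₗ[R] B) (g : B →ₗ[R] C) (hf : Function.Injective f)
    (hg : Function.Surjective g) (h : Function.Exact f g) :
    (ShortComplex.mk (ModuleCat.ofHom f) (ModuleCat.ofHom g)
      (ModuleCat.hom_ext (LinearMap.ext fun x => (h _).2 ⟨x, rfl⟩))).ShortExact where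
  exact := by
    rw [ShortComplex.moduleCat_exact_iff]
    intro x hx
    exact (h x).1 hx
  mono_f := (ModuleCat.mono_iff_injective _).2 hf
  epi_g := (ModuleCat.epi_iff_surjective _).2 hg

/-- pushforward -/
noncomputable def post {A N E : ModuleCat.{w} R} {k i j : ℕ} (β : Ext N E k) (h : i + k = j) :
    Ext A N i →ₗ[R] Ext A E j := Ext.postcompOfLinear β R A h

lemma post_apply {A N E : ModuleCat.{w} R} {k i j : ℕ} (β : Ext N E k) (h : i + k = j)
    (x : Ext A N i) : post β h x = x.comp β h := rfl

lemma post_pre {A A' N E : ModuleCat.{w} R} {k i j : ℕ} (β : Ext N E k) (h : i + k = j)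
    (g : A' ⟶ A) (x : Ext A N i) : post β h (pre N i g x) = pre E j g (post β h x) := by
  rw [post_apply, pre_apply, pre_apply, post_apply]
  rw [Ext.comp_assoc]
  omega

lemma pre_refl (N : ModuleCat.{w} R) (i t : ℕ) (x : Ext (Q I t) N i) :
    pre N i (qm I (le_refl t)) x = x := by
  have : qm I (le_refl t) = 𝟙 _ := by
    apply ModuleCat.hom_ext
    refine LinearMap.ext fun x => ?_
    obtain ⟨x, rfl⟩ := Submodule.mkQ_surjective _ x
    rfl
  rw [this, pre_apply, Ext.mk₀_id_comp]

lemma loc_shift {S : ShortComplex (ModuleCat.{w} R)} (hS : S.ShortExact) (i : ℕ)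
    (h1 : ∀ t, EZ (Q I t) S.X₂ i) (h2 : ∀ t, EZ (Q I t) S.X₂ (i+1)) :
    Nonempty ((localCohomology I i).obj S.X₃ ≃ₗ[R] (localCohomology I (i+1)).obj S.X₁) := by
  refine loc_congr I i (i+1) _ _ (fun t => post hS.extClass rfl)
    (fun t t' h x => post_pre _ _ _ _) ?_ ?_
  · intro t x hx
    obtain ⟨y, rfl⟩ := Ext.covariant_sequence_exact₃ _ hS x rfl hx
    exact ⟨t, le_rfl, by rw [h1 t y, Ext.zero_comp, map_zero]⟩
  · intro t y
    obtain ⟨x, hx⟩ := Ext.covariant_sequence_exact₁ _ hS y (h2 t _) rfl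
    exact ⟨t, le_rfl, x, by rw [pre_refl]; exact hx⟩

lemma loc_pk [IsNoetherianRing R] {S : ShortComplex (ModuleCat.{w} R)} (hS : S.ShortExact) (i : ℕ)
    (h : PK I S.X₃) :
    Nonempty ((localCohomology I (i+2)).obj S.X₁ ≃ₗ[R] (localCohomology I (i+2)).obj S.X₂) := by
  refine loc_congr I (i+2) (i+2) _ _ (fun t => post (Ext.mk₀ S.f) (add_zero _))
    (fun t t' h x => post_pre _ _ _ _) ?_ ?_
  · intro t x hx
    obtain ⟨y, rfl⟩ := Ext.covariant_sequence_exact₁ _ hS x hx (n₀ := i+1) rfl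
    obtain ⟨t', ht, hy⟩ := pz_quot I _ h i t y
    refine ⟨t', ht, ?_⟩
    rw [← post_apply, ← post_pre, hy, map_zero]
  · intro t y
    obtain ⟨t', ht, hy⟩ := pz_quot I _ h (i+1) t (post (Ext.mk₀ S.g) (add_zero _) y)
    rw [← post_pre] at hy
    obtain ⟨x, hx⟩ := Ext.covariant_sequence_exact₂ _ hS _ hy
    exact ⟨t', ht, x, hx⟩

lemma loc_zero (E : ModuleCat.{w} R) (h : PK I E) :
    Nonempty ((localCohomology I 0).obj E ≃ₗ[R] E) := by
  obtain ⟨s, hs⟩ := h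
  let φ : ∀ t, Ext (Q I t) E 0 →ₗ[R] E := fun t =>
    (LinearMap.applyₗ (Submodule.mkQ (I ^ t) 1)) ∘ₗ
      (ModuleCat.homLinearEquiv (S := R)).toLinearMap ∘ₗ (Ext.linearEquiv₀ (R := R)).toLinearMap
  have hφ : ∀ t (f : Q I t ⟶ E), φ t (Ext.mk₀ f) = f.hom (Submodule.mkQ (I ^ t) 1) := by
    intro t f
    have : (Ext.linearEquiv₀ (R := R)) (Ext.mk₀ f) = f := by
      rw [← Ext.linearEquiv₀_symm_apply (R := R), LinearEquiv.apply_symm_apply]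
    change (Ext.linearEquiv₀ (R := R) (Ext.mk₀ f)).hom _ = _
    rw [this]
  refine loc_cocone I 0 E E φ ?_ ?_ ?_
  · intro t t' h x
    obtain ⟨f, rfl⟩ := (Ext.mk₀_bijective _ _).2 x
    rw [pre_apply, Ext.mk₀_comp_mk₀, hφ, hφ]
    rfl
  · intro t x hx
    obtain ⟨f, rfl⟩ := (Ext.mk₀_bijective _ _).2 x
    rw [hφ] at hx
    have : f = 0 := by
      apply ModuleCat.hom_ext
      refine LinearMap.ext fun x => ?_
      obtain ⟨x, rfl⟩ := Submodule.mkQ_surjective _ x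
      have h1 : Submodule.mkQ (I ^ t) x = x • Submodule.mkQ (I ^ t) 1 := by
        rw [← map_smul, smul_eq_mul, mul_one]
      rw [h1]
      refine (map_smul f.hom _ _).trans ?_
      rw [hx, smul_zero]
      rfl
    exact ⟨t, le_rfl, by rw [this, Ext.mk₀_zero, map_zero]⟩
  · intro y
    let f : Q I s ⟶ E := ModuleCat.ofHom ((I ^ s).liftQ (LinearMap.toSpanSingleton R E y)
      (fun r hr => hs r hr y))
    refine ⟨s, Ext.mk₀ f, ?_⟩
    rw [hφ]
    change (1:R) • y = y
    rw [one_smul]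

end Shift
end S17

open CategoryTheory

namespace S17
section Main
open CategoryTheory Limits Abelian Opposite IsLocalRing
universe w
variable {R : Type w} [CommRing R]

/-- short exactness of a pair of linear maps -/
def IsSES {A B C : Type w} [AddCommGroup A] [Module R A] [AddCommGroup B] [Module R B]
    [AddCommGroup C] [Module R C] (f : A →ₗ[R] B) (g : B →ₗ[R] C) : Prop :=
  ∃ h : ModuleCat.ofHom f ≫ ModuleCat.ofHom g = 0,
    (ShortComplex.mk (ModuleCat.ofHom f) (ModuleCat.ofHom g) h).ShortExact

lemma mkSES' {A B C : Type w} [AddCommGroup A] [Module R A] [AddCommGroup B] [Module R B]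
    [AddCommGroup C] [Module R C] {f : A →ₗ[R] B} {g : B →ₗ[R] C} (hf : Function.Injective f)
    (hg : Function.Surjective g) (h : Function.Exact f g) : IsSES f g :=
  ⟨_, mkSES f g hf hg h⟩

section B
variable {P A : Type w} [AddCommGroup P] [Module R P] [AddCommGroup A] [Module R A]
    (π : P →ₗ[R] A) (hπ : Function.Surjective π)

/-- image of the dual in the dual of the kernel -/
abbrev BB : Submodule R (Module.Dual R (LinearMap.ker π)) :=
  LinearMap.range (LinearMap.ker π).subtype.dualMap

/-- restriction to the kernel -/
abbrev rho : Module.Dual R P →ₗ[R] BB π := (LinearMap.ker π).subtype.dualMap.rangeRestrict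

lemma ses1 (hπ : Function.Surjective π) :
    IsSES (A := Module.Dual R A) (B := Module.Dual R P) (C := BB π) π.dualMap (rho π) := by
  refine mkSES' (LinearMap.dualMap_injective_of_surjective hπ)
    (LinearMap.surjective_rangeRestrict _) ?_
  intro f
  constructor
  · intro hf
    have hf : ∀ p, π p = 0 → f p = 0 := fun p hp => by
      have := congrArg Subtype.val hf
      exact congr($this ⟨p, hp⟩)
    let e := π.quotKerEquivOfSurjective hπ
    refine ⟨((LinearMap.ker π).liftQ f hf) ∘ₗ e.symm.toLinearMap, ?_⟩
    refine LinearMap.ext fun p => ?_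
    change (LinearMap.ker π).liftQ f hf (e.symm (π p)) = f p
    have : e.symm (π p) = (LinearMap.ker π).mkQ p := by
      rw [LinearEquiv.symm_apply_eq]; rfl
    rw [this]; rfl
  · rintro ⟨g, rfl⟩
    apply Subtype.ext
    refine LinearMap.ext fun z => ?_
    change g (π z.1) = 0
    rw [show π z.1 = 0 from z.2, map_zero]

/-- connecting map -/
noncomputable def delta : Module.Dual R (LinearMap.ker π) →ₗ[R]
    Ext (ModuleCat.of R A) (ModuleCat.of R R) 1 :=
  Ext.precompOfLinear (ecl π hπ) R _ (add_zero 1) ∘ₗ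
    (Ext.linearEquiv₀ (R := R)).symm.toLinearMap ∘ₗ
    (ModuleCat.homLinearEquiv (M := ModuleCat.of R (LinearMap.ker π)) (N := ModuleCat.of R R) (S := R)).symm.toLinearMap

lemma delta_apply (f : Module.Dual R (LinearMap.ker π)) :
    delta π hπ f = (ecl π hπ).comp (Ext.mk₀ (ModuleCat.ofHom f)) (add_zero 1) := rfl

lemma ses2 [Module.Projective R P] :
    IsSES (A := BB π) (B := Module.Dual R (LinearMap.ker π))
      (C := Ext (ModuleCat.of R A) (ModuleCat.of R R) 1) (BB π).subtype (delta π hπ) := by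
  refine mkSES' (Submodule.subtype_injective _) ?_ ?_
  · intro x
    obtain ⟨y, hy⟩ := exists_ecl π hπ _ 0 x
    obtain ⟨f, rfl⟩ := (Ext.mk₀_bijective _ _).2 y
    exact ⟨f.hom, hy⟩
  · intro f
    rw [delta_apply]
    constructor
    · intro h
      obtain ⟨y, hy⟩ := Ext.contravariant_sequence_exact₁ (LinearMap.shortExact_shortComplexKer hπ) _
        (Ext.mk₀ (ModuleCat.ofHom f)) (add_zero 1) h
      obtain ⟨g, rfl⟩ := (Ext.mk₀_bijective _ _).2 y
      rw [Ext.mk₀_comp_mk₀] at hy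
      have := (Ext.mk₀_bijective _ _).1 hy
      refine ⟨⟨f, ⟨g.hom, ?_⟩⟩, rfl⟩
      exact congrArg ModuleCat.Hom.hom this
    · rintro ⟨⟨_, ⟨g, rfl⟩⟩, rfl⟩
      have h := (LinearMap.shortExact_shortComplexKer hπ).extClass_comp
      change (ecl π hπ).comp (Ext.mk₀ (ModuleCat.ofHom (LinearMap.ker π).subtype ≫ ModuleCat.ofHom g)) (add_zero 1) = 0
      rw [← Ext.mk₀_comp_mk₀, ← Ext.comp_assoc_of_second_deg_zero]
      exact (congrArg (fun z => Ext.comp z (Ext.mk₀ (ModuleCat.ofHom g)) (add_zero 1)) h).trans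
        (Ext.zero_comp _ _ _ _ _)

lemma dimshift (hπ : Function.Surjective π) [Module.Projective R P] (i : ℕ) :
    Nonempty (Ext (ModuleCat.of R (LinearMap.ker π)) (ModuleCat.of R R) (i+1) ≃ₗ[R]
      Ext (ModuleCat.of R A) (ModuleCat.of R R) (i+2)) := by
  refine ⟨LinearEquiv.ofBijective
    (Ext.precompOfLinear (ecl π hπ) R (ModuleCat.of R R) (add_comm 1 (i+1))) ⟨?_, ?_⟩⟩
  · refine (injective_iff_map_eq_zero _).2 fun x hx => ?_
    obtain ⟨y, rfl⟩ := Ext.contravariant_sequence_exact₁ (LinearMap.shortExact_shortComplexKer hπ) _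
        x (add_comm 1 (i+1)) hx
    have : Projective (ModuleCat.of R P) := (IsProjective.iff_projective _ ).1 inferInstance
    have hy : y = 0 := Ext.eq_zero_of_projective (P := ModuleCat.of R P) y
    rw [hy, Ext.comp_zero]
  · intro x
    exact exists_ecl π hπ _ (i+1) x

end B

lemma EZ_sub {A : ModuleCat.{w} R} {B C : Type w} [AddCommGroup B] [Module R B]
    [AddCommGroup C] [Module R C] (f : B →ₗ[R] C) (hf : Function.Injective f)
    (h : EZ A (ModuleCat.of R C) 0) : EZ A (ModuleCat.of R B) 0 := by
  intro x
  obtain ⟨g, rfl⟩ := (Ext.mk₀_bijective _ _).2 x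
  have h1 := h (Ext.mk₀ (g ≫ ModuleCat.ofHom f))
  rw [Ext.mk₀_eq_zero_iff] at h1 ⊢
  have : Mono (ModuleCat.ofHom f) := (ModuleCat.mono_iff_injective _).2 hf
  exact zero_of_comp_mono (ModuleCat.ofHom f) h1

lemma EZ_dual0 {A : ModuleCat.{w} R} (h : EZ A (ModuleCat.of R R) 0) (X : Type w)
    [AddCommGroup X] [Module R X] : EZ A (ModuleCat.of R (Module.Dual R X)) 0 := by
  intro x
  obtain ⟨g, rfl⟩ := (Ext.mk₀_bijective _ _).2 x
  rw [Ext.mk₀_eq_zero_iff]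
  apply ModuleCat.hom_ext
  refine LinearMap.ext fun a => ?_
  refine LinearMap.ext fun x => ?_
  have h1 := h (Ext.mk₀ (g ≫ ModuleCat.ofHom (Module.Dual.eval R X x)))
  rw [Ext.mk₀_eq_zero_iff] at h1
  exact congr($h1 a)

lemma EZ_dualFree {A : ModuleCat.{w} R} {j : ℕ} (h : EZ A (ModuleCat.of R R) j) (k : ℕ) :
    EZ A (ModuleCat.of R (Module.Dual R (Fin k → R))) j :=
  (EZ_free h k).of_iso_right (Pi.basisFun R (Fin k)).toDualEquiv.toModuleIso

lemma EZ_dual1 {A : ModuleCat.{w} R} (h : EZ A (ModuleCat.of R R) 0)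
    (h' : EZ A (ModuleCat.of R R) 1) (X : Type w)
    [AddCommGroup X] [Module R X] [Module.Finite R X] :
    EZ A (ModuleCat.of R (Module.Dual R X)) 1 := by
  intro x
  obtain ⟨k, π, hπ⟩ := Module.Finite.exists_fin' R X
  obtain ⟨hz, hS⟩ := ses1 π hπ
  obtain ⟨y, rfl⟩ := Ext.covariant_sequence_exact₁ A hS x (EZ_dualFree h' k _) (zero_add 1)
  have hy : y = 0 := EZ_sub (BB π).subtype (Submodule.subtype_injective _) (EZ_dual0 h _) y
  rw [hy, Ext.zero_comp]

lemma PK.equiv {I : Ideal R} {A B : Type w} [AddCommGroup A] [Module R A]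
    [AddCommGroup B] [Module R B] (e : A ≃ₗ[R] B) (h : PK I A) : PK I B := by
  obtain ⟨s, hs⟩ := h
  refine ⟨s, fun r hr x => ?_⟩
  obtain ⟨x, rfl⟩ := e.surjective x
  rw [← map_smul, hs r hr, map_zero]

theorem mainInd [IsLocalRing R] [IsNoetherianRing R] (n : ℕ)
    (hD : ∀ j < n, EZ (ModuleCat.of R (R ⧸ maximalIdeal R)) (ModuleCat.of R R) j) (i : ℕ) :
    i + 1 < n → ∀ (P A : Type w) [AddCommGroup P] [Module R P] [AddCommGroup A] [Module R A]
    [Module.Projective R P] [Module.Finite R P] 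
    (π : P →ₗ[R] A) (_ : Function.Surjective π),
    (∀ j, 1 ≤ j → j ≤ i + 1 → PK (maximalIdeal R) (Ext (ModuleCat.of R A) (ModuleCat.of R R) j)) →
    Nonempty (Ext (ModuleCat.of R A) (ModuleCat.of R R) (i+1) ≃ₗ[R]
      (localCohomology (maximalIdeal R) (i+1)).obj (ModuleCat.of R (BB π))) := by
  have hQ : ∀ j < n, ∀ t, EZ (Q (maximalIdeal R) t) (ModuleCat.of R R) j := fun j hj t =>
    fl_vanish (hD j hj) (fl_quot t)
  induction i with
  | zero =>
    intro hi P A _ _ _ _ _ _ π hπ hpk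
    obtain ⟨hz, hS⟩ := ses2 π hπ
    obtain ⟨e1⟩ := loc_zero (maximalIdeal R)
      (ModuleCat.of R (Ext (ModuleCat.of R A) (ModuleCat.of R R) 1)) (hpk 1 le_rfl le_rfl)
    obtain ⟨e2⟩ := loc_shift (maximalIdeal R) hS 0
      (fun t => EZ_dual0 (hQ 0 (by omega) t) _)
      (fun t => EZ_dual1 (hQ 0 (by omega) t) (hQ 1 (by omega) t) _)
    exact ⟨e1.symm.trans e2⟩
  | succ i ih =>
    intro hi P A _ _ _ _ _ _ π hπ hpk
    obtain ⟨k, π', hπ'⟩ := Module.Finite.exists_fin' R (LinearMap.ker π)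
    obtain ⟨d⟩ := dimshift π hπ i
    obtain ⟨e⟩ := ih (by omega) _ _ π' hπ' (by
      intro j h1 h2
      obtain ⟨j, rfl⟩ : ∃ l, j = l + 1 := ⟨j - 1, by omega⟩
      obtain ⟨d⟩ := dimshift π hπ j
      exact (hpk (j+2) (by omega) (by omega)).equiv d.symm)
    obtain ⟨hz, hS⟩ := ses1 π' hπ'
    obtain ⟨e1⟩ := loc_shift (maximalIdeal R) hS (i+1)
      (fun t => EZ_dualFree (hQ (i+1) (by omega) t) k)
      (fun t => EZ_dualFree (hQ (i+2) (by omega) t) k)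
    obtain ⟨hz, hS⟩ := ses2 π hπ
    obtain ⟨e2⟩ := loc_pk (maximalIdeal R) hS i (hpk 1 (by omega) (by omega))
    exact ⟨d.symm.trans (e.trans (e1.trans e2.symm))⟩

lemma PK_of_fl [IsLocalRing R] {A : Type w} [AddCommGroup A] [Module R A]
    (h : IsFiniteLength R A) : PK (maximalIdeal R) A := by
  induction h with
  | of_subsingleton => exact ⟨0, fun r _ x => Subsingleton.elim _ _⟩
  | @of_simple_quotient M _ _ N hs _ ih =>
    obtain ⟨s, hs'⟩ := ih
    obtain ⟨I, hI, ⟨e⟩⟩ := isSimpleModule_iff_quot_maximal.1 hs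
    obtain rfl := IsLocalRing.eq_maximalIdeal hI
    have h1 : ∀ r ∈ maximalIdeal R, ∀ x : M, r • x ∈ N := by
      intro r hr x
      rw [← Submodule.Quotient.mk_eq_zero, Submodule.Quotient.mk_smul]
      apply e.injective
      rw [map_smul, map_zero]
      obtain ⟨y, hy⟩ := Submodule.mkQ_surjective _ (e (Submodule.Quotient.mk x))
      rw [← hy, ← map_smul, Submodule.mkQ_apply, Submodule.Quotient.mk_eq_zero]
      exact Ideal.mul_mem_right _ _ hr
    refine ⟨s + 1, fun r hr x => ?_⟩
    rw [pow_succ] at hr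
    induction hr using Submodule.mul_induction_on' with
    | mem_mul_mem a ha b hb =>
      rw [mul_smul]
      exact congrArg Subtype.val (hs' a ha ⟨b • x, h1 b hb x⟩)
    | add a _ b _ h1 h2 => rw [add_smul, h1, h2, add_zero]

end Main
end S17

namespace S17
section Fin
universe w

lemma BBequiv {R : Type w} [CommRing R] {P P' A : Type w} [AddCommGroup P] [Module R P]
    [AddCommGroup P'] [Module R P'] [AddCommGroup A] [Module R A]
    (π : P →ₗ[R] A) (d : P' →ₗ[R] P) (h : LinearMap.range d = LinearMap.ker π) :
    Nonempty (BB π ≃ₗ[R] LinearMap.range d.dualMap) := by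
  let c : P' →ₗ[R] LinearMap.ker π := d.codRestrict _ fun x => h ▸ LinearMap.mem_range_self d x
  have hc : Function.Surjective c := by
    rintro ⟨y, hy⟩
    rw [← h] at hy
    obtain ⟨x, rfl⟩ := hy
    exact ⟨x, rfl⟩
  have e1 : d.dualMap = c.dualMap ∘ₗ (LinearMap.ker π).subtype.dualMap := rfl
  have e2 : (BB π).map c.dualMap = LinearMap.range d.dualMap := by
    rw [e1, LinearMap.range_comp]
  exact ⟨((BB π).equivMapOfInjective c.dualMap
    (LinearMap.dualMap_injective_of_surjective hc)).trans (LinearEquiv.ofEq _ _ e2)⟩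

/-- functoriality of local cohomology for linear equivalences -/
noncomputable def locMap {R : Type w} [CommRing R] (I : Ideal R) (i : ℕ) {A B : Type w}
    [AddCommGroup A] [Module R A] [AddCommGroup B] [Module R B] (e : A ≃ₗ[R] B) :
    (localCohomology I i).obj (ModuleCat.of R A) ≃ₗ[R]
      (localCohomology I i).obj (ModuleCat.of R B) :=
  ((localCohomology I i).mapIso e.toModuleIso).toLinearEquiv

end Fin
end S17

section Statements

variable (R : Type u) [CommRing R] [IsNoetherianRing R]

theorem stmt17 [IsLocalRing R] (h2 : 2 ≤ rdepth R)
    (M : Type u) [AddCommGroup M] [Module R M] [Module.Finite R M]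
    (F : MinRes R M) (n : ℕ) (h1 : 1 < n) (hn : (n : ℕ∞) ≤ rdepth R)
    (hlen : ∀ i : ℕ, 1 ≤ i → i < n → IsFiniteLength R (extM R i M R)) :
    ∀ i : ℕ, 1 ≤ i → i < n →
      Nonempty (extM R i M R ≃ₗ[R] locCoh R (IsLocalRing.maximalIdeal R) i F.lambdaMod) := by
  intro i hi hi'
  have : Module.Projective R (F.P 0) := F.projective 0
  have : Module.Finite R (F.P 0) := F.finite 0
  have hD : ∀ j < n, S17.EZ (ModuleCat.of R (R ⧸ IsLocalRing.maximalIdeal R))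
      (ModuleCat.of R R) j := by
    intro j hj x
    have hs : Subsingleton (extM R j (R ⧸ IsLocalRing.maximalIdeal R) R) := by
      by_contra hcon
      have : rdepth R ≤ (j : ℕ∞) := sInf_le ⟨j, rfl, hcon⟩
      have h3 : (n : ℕ∞) ≤ (j : ℕ∞) := hn.trans this
      have h4 : n ≤ j := by exact_mod_cast h3
      omega
    have e := S17.extEquiv (R := R) j (R ⧸ IsLocalRing.maximalIdeal R) R
    apply e.symm.injective
    exact Subsingleton.elim _ _
  obtain ⟨k, rfl⟩ : ∃ k, i = k + 1 := ⟨i - 1, by omega⟩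
  obtain ⟨e⟩ := S17.mainInd n hD k hi' (F.P 0) M F.ε F.surj (fun j hj1 hj2 =>
    (S17.PK_of_fl (hlen j hj1 (by omega))).equiv (S17.extEquiv j M R))
  obtain ⟨b⟩ := S17.BBequiv F.ε (F.d 0) F.exact0
  have b' : S17.BB F.ε ≃ₗ[R] F.lambdaMod := b
  have e3 := S17.locMap (A := S17.BB F.ε) (B := F.lambdaMod) (IsLocalRing.maximalIdeal R) (k+1) b'
  exact ⟨((S17.extEquiv (k+1) M R).trans e).trans e3⟩

end Statements
end
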